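/- arXiv:2203.12248 — 7 statements merged into one kernel-verified Lean document; each statement's English description precedes it below -/
import Mathlib

section
/- For every finite simple graph H there exists a real number c_H such that every finite simple graph that does not contain a subdivision of H as a subgraph is conflict-free c_H-choosable. -/
open SimpleGraph

universe u v

namespace CFPaper

variable {V : Type u} {W : Type v}

/-- A coloring is proper if adjacent vertices get distinct colors. -/
def Proper (G : SimpleGraph V) (φ : V → ℕ) : Prop :=
  ∀ ⦃u w : V⦄, G.Adj u w → φ u ≠ φ w

/-- A coloring is conflict-free if every non-isolated vertex has a color appearing
exactly once in its open neighborhood. -/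
def ConflictFree (G : SimpleGraph V) (φ : V → ℕ) : Prop :=
  ∀ v : V, (G.neighborSet v).Nonempty →
    ∃ c : ℕ, {u : V | G.Adj v u ∧ φ u = c}.ncard = 1

/-- `G` is conflict-free `k`-choosable (k a real number). -/
def CFChoosable (G : SimpleGraph V) (k : ℝ) : Prop :=
  ∀ L : V → Finset ℕ, (∀ v, k ≤ ((L v).card : ℝ)) →
    ∃ φ : V → ℕ, (∀ v, φ v ∈ L v) ∧ Proper G φ ∧ ConflictFree G φ

/-- A coloring is `S`-achieved if for every non-isolated vertex there are `s ∈ S`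
and a color appearing exactly `s` times in its open neighborhood. -/
def SAchieved (S : Set ℕ) (G : SimpleGraph V) (φ : V → ℕ) : Prop :=
  ∀ v : V, (G.neighborSet v).Nonempty →
    ∃ s ∈ S, ∃ c : ℕ, {u : V | G.Adj v u ∧ φ u = c}.ncard = s

/-- `G` is `S`-achieved `t`-choosable. -/
def SChoosable (S : Set ℕ) (G : SimpleGraph V) (t : ℕ) : Prop :=
  ∀ L : V → Finset ℕ, (∀ v, t ≤ (L v).card) →
    ∃ φ : V → ℕ, (∀ v, φ v ∈ L v) ∧ Proper G φ ∧ SAchieved S G φ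

/-- `G` is properly `S`-achieved `t`-colorable (colors from `{1,…,t}`). -/
def SColorable (S : Set ℕ) (G : SimpleGraph V) (t : ℕ) : Prop :=
  ∃ φ : V → ℕ, (∀ v, φ v ∈ Finset.Icc 1 t) ∧ Proper G φ ∧ SAchieved S G φ

/-- `G` has a proper conflict-free coloring with colors from `{1,…,t}`. -/
def PCFColorable (G : SimpleGraph V) (t : ℕ) : Prop :=
  ∃ φ : V → ℕ, (∀ v, φ v ∈ Finset.Icc 1 t) ∧ Proper G φ ∧ ConflictFree G φ

/-- The proper conflict-free chromatic number. -/
noncomputable def chiPCF (G : SimpleGraph V) : ℕ := sInf {t : ℕ | PCFColorable G t}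

/-- `(B x : x : ι)` is a tree-decomposition of `G` with underlying tree `T`. -/
structure IsTreeDecomp (G : SimpleGraph V) {ι : Type*} (T : SimpleGraph ι) (B : ι → Set V) :
    Prop where
  tree : T.IsTree
  bags_connected : ∀ vv : V, (T.induce {x : ι | vv ∈ B x}).Connected
  edge_in_bag : ∀ ⦃a b : V⦄, G.Adj a b → ∃ x : ι, a ∈ B x ∧ b ∈ B x

/-- The torso of a tree-decomposition at a node `x`. -/
def torso (G : SimpleGraph V) {ι : Type*} (T : SimpleGraph ι) (B : ι → Set V) (x : ι) :
    SimpleGraph (B x) :=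
  SimpleGraph.fromRel fun a b =>
    G.Adj a b ∨ ∃ y : ι, T.Adj x y ∧ (a : V) ∈ B y ∧ (b : V) ∈ B y

/-- The frame of a tree-decomposition at a node `x`. -/
def frame (G : SimpleGraph V) {ι : Type*} (T : SimpleGraph ι) (B : ι → Set V) (x : ι) :
    Set (Set (B x)) :=
  {s : Set (B x) | ∃ y : ι, T.Adj x y ∧ s = {a : B x | (a : V) ∈ B y}}

/-- A subgraph `H` of `G` is `C`-compatible: every edge of `H` has both ends in some member
of `C`. -/
def Compatible (C : Set (Set V)) (H : SimpleGraph V) : Prop :=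
  ∀ ⦃a b : V⦄, H.Adj a b → ∃ c ∈ C, a ∈ c ∧ b ∈ c

/-- `G` is `(S,C,L,t)`-extendable. -/
def Extendable (S : Set ℕ) (G : SimpleGraph V) (C : Set (Set V)) (L : V → Finset ℕ)
    (t : ℕ) : Prop :=
  ∀ (Wc : Set V), G.IsClique Wc → Wc.ncard ≤ t →
  ∀ (H : SimpleGraph V), H ≤ G → Compatible C H →
  ∀ (φW : V → ℕ), (∀ w ∈ Wc, φW w ∈ L w) →
    (∀ a ∈ Wc, ∀ b ∈ Wc, G.Adj a b → φW a ≠ φW b) →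
  ∀ (f : V → ℕ) (g : V → Bool),
  ∃ φ : V → ℕ, (∀ w, φ w ∈ L w) ∧ Proper G φ ∧ (∀ w ∈ Wc, φ w = φW w) ∧
    (∀ w ∈ Wc, g w = false → ∀ u : V, G.Adj w u → u ∉ Wc → φ u ≠ f w) ∧
    (∀ w : V, (w ∉ Wc ∨ (w ∈ Wc ∧ g w = true)) →
      (((G \ H).neighborSet w = ∅) ∨
        ∃ c : ℕ, {u : V | (G \ H).Adj w u ∧ φ u = c}.ncard ∈ S))

/-- `H` is a minor of `G` (branch-set definition). -/
def IsMinor (H : SimpleGraph W) (G : SimpleGraph V) : Prop :=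
  ∃ ρ : W → Set V,
    (∀ w : W, (G.induce (ρ w)).Connected) ∧
    (Pairwise fun a b => Disjoint (ρ a) (ρ b)) ∧
    ∀ ⦃a b : W⦄, H.Adj a b → ∃ x ∈ ρ a, ∃ y ∈ ρ b, G.Adj x y

/-- The spanning subgraph of `G` whose edges are those between `A` and its complement. -/
def crossGraph (G : SimpleGraph V) (A : Set V) : SimpleGraph V :=
  SimpleGraph.fromRel fun x y => G.Adj x y ∧ x ∈ A ∧ y ∉ A

/-- The odd contraction of `G` determined by the bipartition `{A, Aᶜ}`: contract each
connected component of the spanning bipartite subgraph between `A` and `Aᶜ`. -/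
def oddContract (G : SimpleGraph V) (A : Set V) :
    SimpleGraph ((crossGraph G A).ConnectedComponent) :=
  SimpleGraph.fromRel fun Ct Dt =>
    ∃ x y : V, (crossGraph G A).connectedComponentMk x = Ct ∧
      (crossGraph G A).connectedComponentMk y = Dt ∧ G.Adj x y

/-- `OddContractions G H`: `H` is obtained from `G` by repeatedly applying odd
contractions. -/
inductive OddContractions : ∀ {α : Type u}, SimpleGraph α → ∀ {β : Type u}, SimpleGraph β → Prop
  | refl {α : Type u} (G : SimpleGraph α) : OddContractions G G
  | step {α : Type u} (G : SimpleGraph α) (A : Set α) {β : Type u} {H : SimpleGraph β} :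
      OddContractions (oddContract G A) H → OddContractions G H

/-- `H` is an odd minor of `G`: `H` is isomorphic to a graph obtained from a subgraph of `G`
by repeatedly applying odd contractions. -/
def IsOddMinor (H : SimpleGraph W) (G : SimpleGraph V) : Prop :=
  ∃ (s : Set V) (G₀ : SimpleGraph s), G₀ ≤ G.induce s ∧
    ∃ (β : Type u) (K : SimpleGraph β), OddContractions G₀ K ∧ Nonempty (H ≃g K)

/-- The graph obtained from `H` by subdividing each edge `e` exactly `n e` times, where
`σ` chooses an orientation of each edge. -/
def subdivGraph (H : SimpleGraph W) (σ : H.edgeSet → W × W) (n : H.edgeSet → ℕ) :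
    SimpleGraph (W ⊕ (Σ e : H.edgeSet, Fin (n e))) :=
  SimpleGraph.fromRel fun a b =>
    (∃ (x y : W) (h : H.Adj x y),
        a = Sum.inl x ∧ b = Sum.inl y ∧ n ⟨s(x, y), H.mem_edgeSet.mpr h⟩ = 0) ∨
    (∃ (x : W) (p : Σ e : H.edgeSet, Fin (n e)), a = Sum.inl x ∧ b = Sum.inr p ∧
        ((x = (σ p.1).1 ∧ (p.2 : ℕ) = 0) ∨ (x = (σ p.1).2 ∧ (p.2 : ℕ) = n p.1 - 1))) ∨
    (∃ p q : Σ e : H.edgeSet, Fin (n e), a = Sum.inr p ∧ b = Sum.inr q ∧ p.1 = q.1 ∧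
        (p.2 : ℕ) + 1 = (q.2 : ℕ))

/-- `σ` is a valid orientation of the edges of `H`. -/
def ValidOrientation (H : SimpleGraph W) (σ : H.edgeSet → W × W) : Prop :=
  ∀ e : H.edgeSet, s((σ e).1, (σ e).2) = (e : Sym2 W)

/-- `G` contains a subdivision of `H` as a subgraph. -/
def ContainsSubdivision (H : SimpleGraph W) (G : SimpleGraph V) : Prop :=
  ∃ (σ : H.edgeSet → W × W) (n : H.edgeSet → ℕ), ValidOrientation H σ ∧
    ∃ f : subdivGraph H σ n →g G, Function.Injective f

/-- The strong product of two graphs. -/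
def strongProd {α : Type*} {β : Type*} (A : SimpleGraph α) (B : SimpleGraph β) :
    SimpleGraph (α × β) :=
  SimpleGraph.fromRel fun p q =>
    (A.Adj p.1 q.1 ∧ p.2 = q.2) ∨ (p.1 = q.1 ∧ B.Adj p.2 q.2) ∨
      (A.Adj p.1 q.1 ∧ B.Adj p.2 q.2)


/-- A layering of `G`. -/
def IsLayering (G : SimpleGraph V) (Vl : ℕ → Set V) : Prop :=
  (∀ vv : V, ∃ i : ℕ, vv ∈ Vl i) ∧ (Pairwise fun i j => Disjoint (Vl i) (Vl j)) ∧
  ∀ ⦃a b : V⦄, G.Adj a b → ∃ i : ℕ, a ∈ Vl i ∪ Vl (i + 1) ∧ b ∈ Vl i ∪ Vl (i + 1)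

/-! ### Auxiliary material -/

open scoped Classical in
/-- Twice the number of edges of `G` inside `A`. -/
noncomputable def Ein {V : Type*} (G : SimpleGraph V) (A : Finset V) : ℕ :=
  ∑ v ∈ A, (A.filter (fun w => G.Adj v w)).card

/-- `a` and `b` are joined by a walk inside `S`. -/
def ConnIn {V : Type*} (G : SimpleGraph V) (S : Set V) (a b : V) : Prop :=
  ∃ p : G.Walk a b, ∀ z ∈ p.support, z ∈ S

lemma ConnIn.refl {V : Type*} {G : SimpleGraph V} {S : Set V} {a : V} (h : a ∈ S) :
    ConnIn G S a a := ⟨.nil, by simpa using h⟩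

lemma ConnIn.symm {V : Type*} {G : SimpleGraph V} {S : Set V} {a b : V} (h : ConnIn G S a b) :
    ConnIn G S b a := by
  obtain ⟨p, hp⟩ := h
  exact ⟨p.reverse, by simpa using hp⟩

lemma ConnIn.trans {V : Type*} {G : SimpleGraph V} {S : Set V} {a b c : V}
    (h : ConnIn G S a b) (h' : ConnIn G S b c) : ConnIn G S a c := by
  obtain ⟨p, hp⟩ := h
  obtain ⟨q, hq⟩ := h'
  refine ⟨p.append q, fun z hz => ?_⟩
  rw [SimpleGraph.Walk.mem_support_append_iff] at hz
  rcases hz with hz | hz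
  · exact hp z hz
  · exact hq z hz

lemma ConnIn.adj {V : Type*} {G : SimpleGraph V} {S : Set V} {a b : V}
    (ha : a ∈ S) (hb : b ∈ S) (h : G.Adj a b) : ConnIn G S a b := by
  refine ⟨h.toWalk, fun z hz => ?_⟩
  simp at hz
  rcases hz with rfl | rfl <;> assumption

lemma ConnIn.mono {V : Type*} {G : SimpleGraph V} {S T : Set V} {a b : V}
    (hST : S ⊆ T) (h : ConnIn G S a b) : ConnIn G T a b := by
  obtain ⟨p, hp⟩ := h
  exact ⟨p, fun z hz => hST (hp z hz)⟩

/-- Connecting set together with the ends of the edge. -/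
def withEnds {W V : Type*} (f : W → V) (P : Sym2 W → Set V) (e : Sym2 W) : Set V :=
  {v | v ∈ P e ∨ ∃ z ∈ e, f z = v}

/-- Topological minor model of `H` in `G` within `A`. -/
def TM {W V : Type*} (H : SimpleGraph W) (G : SimpleGraph V) (A : Set V) : Prop :=
  ∃ (f : W → V) (P : Sym2 W → Set V), Function.Injective f ∧ (∀ w, f w ∈ A) ∧
    (∀ e ∈ H.edgeSet, P e ⊆ A) ∧ (∀ e ∈ H.edgeSet, ∀ w, f w ∉ P e) ∧
    (∀ e ∈ H.edgeSet, ∀ e' ∈ H.edgeSet, e ≠ e' → Disjoint (P e) (P e')) ∧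
    ∀ x y, H.Adj x y → ConnIn G (withEnds f P s(x, y)) (f x) (f y)

lemma TM.mono {W V : Type*} {H : SimpleGraph W} {G : SimpleGraph V} {A B : Set V}
    (h : TM H G A) (hAB : A ⊆ B) : TM H G B := by
  obtain ⟨f, P, h1, h2, h3, h4, h5, h6⟩ := h
  exact ⟨f, P, h1, fun w => hAB (h2 w), fun e he => (h3 e he).trans hAB, h4, h5, h6⟩

lemma TM.contains {W V : Type*} {H : SimpleGraph W} {G : SimpleGraph V} {A : Set V}
    (h : TM H G A) : ContainsSubdivision H G := by
  classical
  obtain ⟨f, P, hf, -, -, h4, h5, h6⟩ := h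
  have hout : ∀ e : Sym2 W, s((Quot.out e).1, (Quot.out e).2) = e := fun e => Quot.out_eq e
  have hadj : ∀ e : H.edgeSet, H.Adj (Quot.out e.1).1 (Quot.out e.1).2 := fun e => by
    rw [← H.mem_edgeSet, hout]; exact e.2
  have hp : ∀ e : H.edgeSet, ∃ p : G.Walk (f (Quot.out e.1).1) (f (Quot.out e.1).2),
      p.IsPath ∧ ∀ z ∈ p.support, z ∈ withEnds f P e.1 := by
    intro e
    obtain ⟨p, hp⟩ := h6 _ _ (hadj e)
    rw [hout] at hp
    exact ⟨p.bypass, p.bypass_isPath, fun z hz => hp z (p.support_bypass_subset hz)⟩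
  choose p hpath hsupp using hp
  have hlen : ∀ e, 0 < (p e).length := by
    intro e
    rcases Nat.eq_zero_or_pos (p e).length with h0 | h0
    · exact absurd (hf (SimpleGraph.Walk.eq_of_length_eq_zero h0)) (hadj e).ne
    · exact h0
  have hinj : ∀ e i j, i ≤ (p e).length → j ≤ (p e).length →
      (p e).getVert i = (p e).getVert j → i = j := fun e i j hi hj hij =>
    (hpath e).getVert_injOn hi hj hij
  have hint : ∀ e i, 0 < i → i < (p e).length → (p e).getVert i ∈ P e.1 := by
    intro e i hi hi'
    rcases hsupp e _ ((p e).getVert_mem_support i) with h | ⟨z, hz, hzi⟩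
    · exact h
    · exfalso
      rw [← hout e.1, Sym2.mem_iff] at hz
      rcases hz with rfl | rfl
      · have := hinj e i 0 hi'.le (Nat.zero_le _) (by rw [← hzi]; simp)
        omega
      · have := hinj e i (p e).length hi'.le le_rfl (by rw [← hzi]; simp)
        omega
  let F : W ⊕ (Σ e : H.edgeSet, Fin ((p e).length - 1)) → V :=
    Sum.elim f (fun q => (p q.1).getVert (q.2 + 1))
  have hFr : ∀ q : (Σ e : H.edgeSet, Fin ((p e).length - 1)), F (Sum.inr q) ∈ P q.1.1 := by
    intro q
    have := q.2.2
    exact hint q.1 _ (by omega) (by omega)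
  refine ⟨fun e => Quot.out e.1, fun e => (p e).length - 1, fun e => hout e.1, ⟨F, ?_⟩, ?_⟩
  · have key : ∀ a b, ((∃ (x y : W) (h : H.Adj x y),
        a = Sum.inl x ∧ b = Sum.inl y ∧ (p ⟨s(x, y), H.mem_edgeSet.mpr h⟩).length - 1 = 0) ∨
        (∃ (x : W) (q : Σ e : H.edgeSet, Fin ((p e).length - 1)), a = Sum.inl x ∧ b = Sum.inr q ∧
        ((x = (Quot.out q.1.1).1 ∧ (q.2 : ℕ) = 0) ∨
          (x = (Quot.out q.1.1).2 ∧ (q.2 : ℕ) = (p q.1).length - 1 - 1))) ∨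
        (∃ q r : Σ e : H.edgeSet, Fin ((p e).length - 1), a = Sum.inr q ∧ b = Sum.inr r ∧
          q.1 = r.1 ∧ (q.2 : ℕ) + 1 = (r.2 : ℕ))) → G.Adj (F a) (F b) := by
      rintro a b (⟨x, y, h, rfl, rfl, hn⟩ | ⟨x, q, rfl, rfl, hq⟩ | ⟨q, r, rfl, rfl, hqr, hn⟩)
      · have h1 : (p ⟨s(x, y), H.mem_edgeSet.mpr h⟩).length = 1 := by
          have := hlen ⟨s(x, y), H.mem_edgeSet.mpr h⟩
          omega
        have h2 := SimpleGraph.Walk.adj_of_length_eq_one h1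
        have h3 := hout s(x, y)
        rw [Sym2.eq_iff] at h3
        rcases h3 with ⟨h3, h4⟩ | ⟨h3, h4⟩
        · simp only [h3, h4] at h2; exact h2
        · simp only [h3, h4] at h2; exact h2.symm
      · have hlt := q.2.2
        rcases hq with ⟨rfl, h0⟩ | ⟨rfl, h0⟩
        · have := (p q.1).adj_getVert_succ (i := 0) (by omega)
          simpa [F, h0] using this
        · have := (p q.1).adj_getVert_succ (i := (q.2 : ℕ) + 1) (by omega)
          have h1 : (q.2 : ℕ) + 1 + 1 = (p q.1).length := by omega
          rw [h1, SimpleGraph.Walk.getVert_length] at this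
          exact this.symm
      · obtain ⟨e, i⟩ := q
        obtain ⟨e', j⟩ := r
        obtain rfl : e = e' := hqr
        have := (p e).adj_getVert_succ (i := (i : ℕ) + 1) (by
          have := i.2
          have := j.2
          simp only at hn
          omega)
        simp only at hn
        simpa [F, hn] using this
    intro a b hab
    rw [subdivGraph, SimpleGraph.fromRel_adj] at hab
    rcases hab.2 with h | h
    · exact key a b h
    · exact (key b a h).symm
  · rintro (x | q) (y | r) hxy
    · exact congrArg Sum.inl (hf hxy)
    · exact absurd (show f x ∈ P r.1.1 from (show f x = F (Sum.inr r) from hxy) ▸ hFr r)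
        (h4 _ r.1.2 x)
    · exact absurd (show f y ∈ P q.1.1 from (show F (Sum.inr q) = f y from hxy) ▸ hFr q)
        (h4 _ q.1.2 y)
    · have hq := hFr q
      have hr := hFr r
      have hxy' : F (Sum.inr q) = F (Sum.inr r) := hxy
      obtain ⟨e, i⟩ := q
      obtain ⟨e', j⟩ := r
      by_cases hee : e = e'
      · subst hee
        have hi : (i : ℕ) < (p e).length - 1 := i.2
        have hj : (j : ℕ) < (p e).length - 1 := j.2
        have := hinj e (i + 1) (j + 1) (by omega) (by omega) hxy'
        have : i = j := Fin.ext (by omega)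
        rw [this]
      · exfalso
        have hd := h5 _ e.2 _ e'.2 (fun h => hee (Subtype.ext h))
        rw [hxy'] at hq
        exact Set.disjoint_left.1 hd hq hr

/-! ### Bounded density (Mader) -/

lemma Ein_erase {V : Type*} [DecidableEq V] (G : SimpleGraph V) (B : Finset V)
    [∀ v, DecidablePred (G.Adj v)] (u : V) (hu : u ∈ B) :
    Ein G B = Ein G (B.erase u) + 2 * (B.filter (fun w => G.Adj u w)).card := by
  classical
  unfold Ein
  have h1 : ∀ v, (B.filter (fun w => G.Adj v w)).card =
      ((B.erase u).filter (fun w => G.Adj v w)).card + (if G.Adj v u then 1 else 0) := by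
    intro v
    rw [Finset.filter_erase]
    split_ifs with h
    · rw [Finset.card_erase_add_one]; simp [hu, h]
    · rw [Finset.erase_eq_of_notMem]; · rfl
      simp [h]
  rw [← Finset.add_sum_erase _ _ hu]
  have h2 : ∑ v ∈ B.erase u, (B.filter (fun w => G.Adj v w)).card =
      ∑ v ∈ B.erase u, ((B.erase u).filter (fun w => G.Adj v w)).card
       + (B.filter (fun w => G.Adj u w)).card := by
    rw [Finset.sum_congr rfl (fun v _ => h1 v), Finset.sum_add_distrib]
    congr 1
    rw [← Finset.card_filter]
    congr 1
    ext w
    simp only [Finset.mem_filter, Finset.mem_erase]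
    constructor
    · rintro ⟨⟨_, h⟩, h'⟩; exact ⟨h, h'.symm⟩
    · rintro ⟨h, h'⟩; exact ⟨⟨h'.ne', h⟩, h'.symm⟩
  have h3 : ∀ v, (B.filter (fun w => G.Adj v w)).card =
    (@Finset.filter V (fun w => G.Adj v w) (fun a ↦ Classical.propDecidable _) B).card := by
      intro v; congr
  simp only [← h3]
  rw [h2]
  have h4 : ∀ v, ((B.erase u).filter (fun w => G.Adj v w)).card =
    (@Finset.filter V (fun w => G.Adj v w) (fun a ↦ Classical.propDecidable _) (B.erase u)).card := by
      intro v; congr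
  simp only [← h4]
  ring

lemma exists_conn_set {V : Type*} [DecidableEq V] (G : SimpleGraph V)
    [∀ v, DecidablePred (G.Adj v)] (c : ℕ) (A : Finset V)
    (hA : A.Nonempty) (hE : (2 * c + 1) * A.card ≤ Ein G A) :
    ∃ U N : Finset V, U ⊆ A ∧ U.Nonempty ∧ N ⊆ A \ U ∧ (∀ a ∈ U, ∀ b ∈ U, ConnIn G U a b) ∧
      (∀ v ∈ N, ∃ u ∈ U, G.Adj v u) ∧ (∀ v ∈ N, c ≤ (N.filter (fun w => G.Adj v w)).card) ∧
      (2 * c + 1) * ((A \ U).card + 1) ≤ Ein G (A \ U) + 2 * N.card := by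
  let N : Finset V → Finset V := fun U => (A \ U).filter (fun v => ∃ u ∈ U, G.Adj v u)
  let Q : Finset V → Prop := fun U => U.Nonempty ∧ (∀ a ∈ U, ∀ b ∈ U, ConnIn G U a b) ∧
    (2 * c + 1) * ((A \ U).card + 1) ≤ Ein G (A \ U) + 2 * (N U).card
  classical
  let F := A.powerset.filter Q
  have hF : F.Nonempty := by
    obtain ⟨v, hv⟩ := hA
    refine ⟨{v}, ?_⟩
    simp only [F, Finset.mem_filter, Finset.mem_powerset, Finset.singleton_subset_iff]
    refine ⟨hv, Finset.singleton_nonempty v, ?_, ?_⟩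
    · intro a ha b hb
      rw [Finset.mem_singleton] at ha hb
      subst ha; subst hb
      exact ConnIn.refl (by simp)
    · have h1 : A \ {v} = A.erase v := by ext; simp [and_comm]
      have h2 : N {v} = A.filter (fun w => G.Adj v w) := by
        ext w
        simp only [N, Finset.mem_filter, Finset.mem_sdiff, Finset.mem_singleton, exists_eq_left]
        constructor
        · rintro ⟨⟨h, _⟩, h'⟩; exact ⟨h, h'.symm⟩
        · rintro ⟨h, h'⟩; exact ⟨⟨h, h'.ne'⟩, h'.symm⟩
      rw [h1, Finset.card_erase_add_one hv, h2, ← Ein_erase G A v hv]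
      exact hE
  obtain ⟨U, hU, hmax⟩ := Finset.exists_max_image F Finset.card hF
  simp only [F, Finset.mem_filter, Finset.mem_powerset] at hU hmax
  obtain ⟨hUA, hUne, hconn, hQ⟩ := hU
  refine ⟨U, N U, hUA, hUne, Finset.filter_subset _ _, hconn, fun v hv => (Finset.mem_filter.1 hv).2,
    ?_, hQ⟩
  intro v hv
  have hv' := Finset.mem_filter.1 hv
  have hvA : v ∈ A \ U := hv'.1
  obtain ⟨u, huU, hvu⟩ := hv'.2
  have hvU : v ∉ U := (Finset.mem_sdiff.1 hvA).2
  by_contra hlt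
  push Not at hlt
  have hnot : ¬ Q (insert v U) := by
    intro hq
    have := hmax (insert v U) ⟨Finset.insert_subset (Finset.mem_sdiff.1 hvA).1 hUA, hq⟩
    rw [Finset.card_insert_of_notMem hvU] at this
    omega
  apply hnot
  refine ⟨Finset.insert_nonempty _ _, ?_, ?_⟩
  · have hsub : (U : Set V) ⊆ ((insert v U : Finset V) : Set V) := by simp
    have hv1 : ∀ b ∈ U, ConnIn G ((insert v U : Finset V) : Set V) v b := fun b hb =>
      (ConnIn.adj (by simp) (by simp [huU]) hvu).trans ((hconn u huU b hb).mono hsub)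
    intro a ha b hb
    rw [Finset.mem_insert] at ha hb
    rcases ha with rfl | ha <;> rcases hb with rfl | hb
    · exact ConnIn.refl (by simp)
    · exact hv1 b hb
    · exact (hv1 a ha).symm
    · exact (hconn a ha b hb).mono hsub
  · have h1 : A \ insert v U = (A \ U).erase v := by
      ext x; simp only [Finset.mem_sdiff, Finset.mem_insert, Finset.mem_erase]; tauto
    have h2 := Ein_erase G (A \ U) v hvA
    have h3 := Finset.card_erase_add_one hvA
    -- neighbours of v in A \ U
    have h4 : ((A \ U).filter (fun w => G.Adj v w)).card =
        ((N U).filter (fun w => G.Adj v w)).card +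
        (((A \ U) \ N U).filter (fun w => G.Adj v w)).card := by
      rw [← Finset.card_union_of_disjoint]
      · congr 1
        ext x
        have : x ∈ N U → x ∈ A \ U := fun h => (Finset.mem_filter.1 h).1
        simp only [Finset.mem_filter, Finset.mem_union, Finset.mem_sdiff] at this ⊢
        tauto
      · rw [Finset.disjoint_left]
        intro x hx hx'
        simp only [Finset.mem_filter, Finset.mem_sdiff] at hx hx'
        tauto
    have h5 : ((N U).erase v ∪ ((A \ U) \ N U).filter (fun w => G.Adj v w)) ⊆ N (insert v U) := by
      intro x hx
      rw [Finset.mem_union] at hx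
      rcases hx with hx | hx
      · rw [Finset.mem_erase] at hx
        obtain ⟨hxv, hx⟩ := hx
        obtain ⟨hx1, y, hy, hxy⟩ := Finset.mem_filter.1 hx
        refine Finset.mem_filter.2 ⟨?_, y, Finset.mem_insert_of_mem hy, hxy⟩
        rw [h1]; exact Finset.mem_erase.2 ⟨hxv, hx1⟩
      · obtain ⟨hx1, hxy⟩ := Finset.mem_filter.1 hx
        refine Finset.mem_filter.2 ⟨?_, v, Finset.mem_insert_self _ _, hxy.symm⟩
        rw [h1]; exact Finset.mem_erase.2 ⟨hxy.ne', (Finset.mem_sdiff.1 hx1).1⟩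
    have h6 := Finset.card_le_card h5
    rw [Finset.card_union_of_disjoint] at h6
    · have h7 := Finset.card_erase_add_one hv
      rw [h1]
      rw [← h3] at hQ
      have h8 : (2 * c + 1) * (((A \ U).erase v).card + 1 + 1) =
        (2 * c + 1) * (((A \ U).erase v).card + 1) + (2 * c + 1) := by ring
      omega
    · rw [Finset.disjoint_left]
      intro x hx hx'
      simp only [Finset.mem_filter, Finset.mem_sdiff, Finset.mem_erase] at hx hx'
      tauto

/-- The density bound. -/
def madc (r : ℕ) : ℕ → ℕ
  | 0 => r
  | k + 1 => 2 * madc r k + 1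

lemma mader {W : Type*} [Fintype W] (k : ℕ) : ∀ (H : SimpleGraph W), H.edgeSet.ncard = k →
    ∀ {V : Type*} (G : SimpleGraph V) (A : Finset V), A.Nonempty →
    madc (Fintype.card W) k * A.card ≤ Ein G A → TM H G A := by
  classical
  induction k with
  | zero =>
    intro H hH V G A hA hE
    have hE' : H.edgeSet = ∅ := by
      rwa [Set.ncard_eq_zero (Set.toFinite _)] at hH
    have h1 : Ein G A ≤ A.card * A.card := by
      unfold Ein
      calc _ ≤ ∑ v ∈ A, A.card := Finset.sum_le_sum (fun v _ => Finset.card_filter_le _ _)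
        _ = _ := by simp
    have h2 : Fintype.card W ≤ A.card :=
      Nat.le_of_mul_le_mul_right (hE.trans h1) hA.card_pos
    have h3 : Fintype.card W ≤ Fintype.card A := by simpa using h2
    obtain ⟨g⟩ := Function.Embedding.nonempty_of_card_le h3
    refine ⟨fun w => (g w : V), fun _ => ∅, fun a b h => g.injective (Subtype.ext h),
      fun w => (g w).2, ?_, ?_, ?_, ?_⟩
    · simp
    · simp
    · simp
    · intro x y hxy
      have : s(x, y) ∈ H.edgeSet := hxy
      rw [hE'] at this
      exact absurd this (by simp)
  | succ k ih =>
    intro H hH V G A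
    induction A using Finset.strongInduction with
    | H A ihA =>
    intro hA hE
    obtain ⟨U, N, hUA, hUne, hNA, hconn, hNU, hdeg, hQ⟩ :=
      exists_conn_set G (madc (Fintype.card W) k) A hA hE
    rcases N.eq_empty_or_nonempty with rfl | hN
    · simp only [Finset.card_empty, mul_zero, add_zero] at hQ
      have hne : (A \ U).Nonempty := by
        rw [Finset.nonempty_iff_ne_empty]
        intro h0
        rw [h0] at hQ
        simp [Ein] at hQ
      refine (ihA (A \ U) (Finset.sdiff_ssubset hUA hUne) hne (le_trans ?_ hQ)).mono ?_
      · exact Nat.mul_le_mul_left _ (Nat.le_succ _)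
      · exact_mod_cast Finset.sdiff_subset
    · have hne : H.edgeSet.Nonempty := by
        rw [Set.nonempty_iff_ne_empty]
        intro h0
        simp [h0] at hH
      obtain ⟨e, he⟩ := hne
      have hdel : (H.deleteEdges {e}).edgeSet = H.edgeSet \ {e} := by simp
      have hcard : (H.deleteEdges {e}).edgeSet.ncard = k := by
        rw [hdel, Set.ncard_diff_singleton_of_mem he, hH]; rfl
      have hEN : madc (Fintype.card W) k * N.card ≤ Ein G N := by
        unfold Ein
        rw [mul_comm, ← smul_eq_mul]
        apply Finset.card_nsmul_le_sum
        intro v hv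
        convert hdeg v hv
      obtain ⟨f, P, h1, h2, h3, h4, h5, h6⟩ := ih (H.deleteEdges {e}) hcard G N hN hEN
      rw [hdel] at h3 h4 h5
      have hNU' : ∀ x ∈ N, x ∉ U := fun x hx => (Finset.mem_sdiff.1 (hNA hx)).2
      refine ⟨f, Function.update P e U, h1, ?_, ?_, ?_, ?_, ?_⟩
      · intro w; exact (Finset.mem_sdiff.1 (hNA (h2 w))).1
      · intro e' he'
        by_cases hee : e' = e
        · subst hee; simpa using hUA
        · rw [Function.update_of_ne hee]
          intro x hx
          exact (Finset.mem_sdiff.1 (hNA (h3 e' ⟨he', hee⟩ hx))).1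
      · intro e' he' w
        by_cases hee : e' = e
        · subst hee; simpa using hNU' _ (h2 w)
        · rw [Function.update_of_ne hee]
          exact h4 e' ⟨he', hee⟩ w
      · have hd : ∀ e' ∈ H.edgeSet, e' ≠ e → Disjoint (P e') (U : Set V) := by
          intro e' he' hee
          rw [Set.disjoint_left]
          intro x hx
          exact hNU' x (h3 e' ⟨he', hee⟩ hx)
        intro e₁ he₁ e₂ he₂ hne
        by_cases h₁ : e₁ = e
        · subst h₁
          rw [Function.update_self, Function.update_of_ne hne.symm]
          exact (hd e₂ he₂ hne.symm).symm
        · by_cases h₂ : e₂ = e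
          · subst h₂
            rw [Function.update_self, Function.update_of_ne hne]
            exact hd e₁ he₁ hne
          · rw [Function.update_of_ne h₁, Function.update_of_ne h₂]
            exact h5 e₁ ⟨he₁, h₁⟩ e₂ ⟨he₂, h₂⟩ hne
      · intro x y hxy
        by_cases hee : s(x, y) = e
        · obtain ⟨a, ha, hxa⟩ := hNU (f x) (h2 x)
          obtain ⟨b, hb, hyb⟩ := hNU (f y) (h2 y)
          have hU : (U : Set V) ⊆ withEnds f (Function.update P e U) s(x, y) := by
            intro z hz
            left
            rw [hee, Function.update_self]; exact hz
          have hx : f x ∈ withEnds f (Function.update P e U) s(x, y) := Or.inr ⟨x, by simp, rfl⟩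
          have hy : f y ∈ withEnds f (Function.update P e U) s(x, y) := Or.inr ⟨y, by simp, rfl⟩
          exact (ConnIn.adj hx (hU ha) hxa).trans (((hconn a ha b hb).mono hU).trans
            (ConnIn.adj (hU hb) hy hyb.symm))
        · have := h6 x y (by simp [hxy, hee])
          refine this.mono ?_
          rintro z (hz | hz)
          · left; rwa [Function.update_of_ne hee]
          · right; exact hz

/-! ### Shallow topological minors -/

/-- `M` and `g` describe vertex-disjoint paths of length two between pairs of vertices of `S`. -/
structure MidSys {V : Type*} (G : SimpleGraph V) (S M : Finset V) (g : V → Sym2 V) : Prop where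
  inj : Set.InjOn g M
  notMem : ∀ w ∈ M, w ∉ S
  notDiag : ∀ w ∈ M, ¬ (g w).IsDiag
  mem : ∀ w ∈ M, ∀ a ∈ g w, a ∈ S ∧ G.Adj w a

/-- The graph on `S` obtained from `G[S]` by adding the pairs described by `M` and `g`. -/
def midGraph {V : Type*} (G : SimpleGraph V) (S M : Finset V) (g : V → Sym2 V) :
    SimpleGraph V where
  Adj a b := a ≠ b ∧ a ∈ S ∧ b ∈ S ∧ (G.Adj a b ∨ ∃ w ∈ M, g w = s(a, b))
  symm := ⟨by
    rintro a b ⟨h1, h2, h3, h4⟩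
    refine ⟨h1.symm, h3, h2, ?_⟩
    rw [Sym2.eq_swap]
    exact h4.imp_left (fun h => h.symm)⟩
  loopless := ⟨fun a h => h.1 rfl⟩

lemma MidSys.TM {W V : Type*} {H : SimpleGraph W} {G : SimpleGraph V} {S M : Finset V}
    {g : V → Sym2 V} (hM : MidSys G S M g) (h : TM H (midGraph G S M g) S) :
    TM H G Set.univ := by
  obtain ⟨f, P, h1, h2, h3, h4, h5, h6⟩ := h
  let P' : Sym2 W → Set V := fun e => P e ∪ {w | w ∈ M ∧ ∀ a ∈ g w, a ∈ withEnds f P e}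
  refine ⟨f, P', h1, fun _ => trivial, fun _ _ _ _ => trivial, ?_, ?_, ?_⟩
  · rintro e he w (hw | ⟨hw, -⟩)
    · exact h4 e he w hw
    · exact hM.notMem _ hw (h2 w)
  · intro e he e' he' hne
    have hd := h5 e he e' he' hne
    rw [Set.disjoint_left] at hd ⊢
    rintro w (hw | ⟨hw, hw1⟩) (hw' | ⟨hw', hw2⟩)
    · exact hd hw hw'
    · exact hM.notMem _ hw' (h3 e he hw)
    · exact hM.notMem _ hw (h3 e' he' hw')
    · have key : ∀ a ∈ g w, ∃ z, z ∈ e ∧ z ∈ e' ∧ f z = a := by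
        intro a ha
        rcases hw1 a ha with h | ⟨z, hz, hza⟩ <;> rcases hw2 a ha with h' | ⟨z', hz', hza'⟩
        · exact absurd h' (hd h)
        · subst hza'; exact absurd h (h4 e he z')
        · subst hza; exact absurd h' (h4 e' he' z)
        · have : z = z' := h1 (hza.trans hza'.symm)
          subst this
          exact ⟨z, hz, hz', hza⟩
      have hnd := hM.notDiag w hw
      generalize g w = gw at key hnd
      induction gw using Sym2.ind with
      | _ a b =>
      obtain ⟨z, hz, hz', rfl⟩ := key a (by simp)
      obtain ⟨y, hy, hy', rfl⟩ := key b (by simp)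
      have hzy : z ≠ y := by rintro rfl; simp at hnd
      exact hne (((Sym2.mem_and_mem_iff hzy).1 ⟨hz, hy⟩).trans
        ((Sym2.mem_and_mem_iff hzy).1 ⟨hz', hy'⟩).symm)
  · intro x y hxy
    obtain ⟨p, hp⟩ := h6 x y hxy
    have hsub : withEnds f P s(x, y) ⊆ withEnds f P' s(x, y) := by
      rintro z (hz | hz)
      · exact Or.inl (Or.inl hz)
      · exact Or.inr hz
    generalize f x = a at p
    generalize f y = b at p
    induction p with
    | nil => exact ConnIn.refl (hsub (hp _ (by simp)))
    | @cons a c b hac q ihq =>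
      refine ConnIn.trans ?_ (ihq (fun z hz => hp z (by simp [hz])))
      have ha := hp a (by simp)
      have hc := hp c (by simp)
      obtain ⟨hne, haS, hcS, hG | ⟨w, hw, hgw⟩⟩ := hac
      · exact ConnIn.adj (hsub ha) (hsub hc) hG
      · have hwP : w ∈ withEnds f P' s(x, y) := by
          left; right
          refine ⟨hw, fun z hz => ?_⟩
          rw [hgw, Sym2.mem_iff] at hz
          rcases hz with rfl | rfl <;> assumption
        exact (ConnIn.adj (hsub ha) hwP (hM.mem w hw a (by simp [hgw])).2.symm).trans
          (ConnIn.adj hwP (hsub hc) (hM.mem w hw c (by simp [hgw])).2)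

lemma MidSys.card_le {V : Type*} {G : SimpleGraph V} {S M : Finset V}
    {g : V → Sym2 V} (hM : MidSys G S M g) : M.card ≤ Ein (midGraph G S M g) S := by
  classical
  unfold Ein
  rw [← Finset.card_sigma]
  have hout : ∀ e : Sym2 V, s((Quot.out e).1, (Quot.out e).2) = e := fun e => Quot.out_eq e
  apply Finset.card_le_card_of_injOn (fun w => ⟨(Quot.out (g w)).1, (Quot.out (g w)).2⟩)
  · intro w hw
    have hw : w ∈ M := hw
    have h1 : (Quot.out (g w)).1 ∈ S := (hM.mem w hw _ (Sym2.out_fst_mem _)).1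
    have h2 : (Quot.out (g w)).2 ∈ S := (hM.mem w hw _ (Sym2.out_snd_mem _)).1
    have h3 := hM.notDiag w hw
    rw [← hout (g w), Sym2.mk_isDiag_iff] at h3
    simp only [Finset.coe_sigma, Set.mem_sigma_iff, Finset.mem_coe, Finset.mem_filter]
    exact ⟨h1, h2, h3, h1, h2, Or.inr ⟨w, hw, (hout _).symm⟩⟩
  · intro w hw w' hw' h
    apply hM.inj hw hw'
    simp only [Sigma.mk.injEq, heq_eq_eq] at h
    rw [← hout (g w), ← hout (g w'), h.1, h.2]

lemma exists_good {W V : Type*} [Fintype V] {H : SimpleGraph W} {G : SimpleGraph V} {d : ℕ}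
    (hd : ∀ (G' : SimpleGraph V) (A : Finset V), A.Nonempty → d * A.card ≤ Ein G' A → TM H G' A)
    (hG : ¬ TM H G Set.univ) (S : Finset V) (hS : S.Nonempty) :
    ∃ v ∈ S, ∃ D M : Finset V, 2 * D.card + M.card < 2 * d + d * (1 + d) ∧
      (∀ u ∈ S, G.Adj v u → u ∈ D) ∧
      ∀ u, u ∉ S → G.Adj v u → u ∉ M → ∀ a ∈ S, a ≠ v → G.Adj u a → a ∈ D := by
  classical
  -- choose a maximal system
  let F : Finset (Finset V) := Finset.univ.filter (fun M => ∃ g, MidSys G S M g)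
  have hF : F.Nonempty := by
    refine ⟨∅, ?_⟩
    simp only [F, Finset.mem_filter, Finset.mem_univ, true_and]
    exact ⟨fun v => s(v, v), by simp, by simp, by simp, by simp⟩
  obtain ⟨M, hMF, hmax⟩ := Finset.exists_max_image F Finset.card hF
  simp only [F, Finset.mem_filter, Finset.mem_univ, true_and] at hMF hmax
  obtain ⟨g, hM⟩ := hMF
  set J := midGraph G S M g with hJ
  have hclique : ∀ w, w ∉ S → w ∉ M → ∀ a ∈ S, ∀ b ∈ S, a ≠ b → G.Adj w a → G.Adj w b →
      J.Adj a b := by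
    intro w hwS hwM a ha b hb hab hwa hwb
    by_contra hJab
    have hno : ∀ w' ∈ M, g w' ≠ s(a, b) := fun w' hw' h => hJab ⟨hab, ha, hb, Or.inr ⟨w', hw', h⟩⟩
    have hne : ∀ x ∈ M, x ≠ w := fun x hx h => hwM (h ▸ hx)
    have : MidSys G S (insert w M) (Function.update g w s(a, b)) := by
      refine ⟨?_, ?_, ?_, ?_⟩
      · intro x hx y hy hxy
        simp only [Finset.coe_insert, Set.mem_insert_iff, Finset.mem_coe] at hx hy
        rcases hx with rfl | hx <;> rcases hy with rfl | hy
        · rfl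
        · rw [Function.update_self, Function.update_of_ne (hne y hy)] at hxy
          exact absurd hxy.symm (hno y hy)
        · rw [Function.update_self, Function.update_of_ne (hne x hx)] at hxy
          exact absurd hxy (hno x hx)
        · rw [Function.update_of_ne (hne x hx), Function.update_of_ne (hne y hy)] at hxy
          exact hM.inj hx hy hxy
      · intro x hx
        rcases Finset.mem_insert.1 hx with rfl | hx
        · exact hwS
        · exact hM.notMem x hx
      · intro x hx
        rcases Finset.mem_insert.1 hx with rfl | hx
        · simpa using hab
        · rw [Function.update_of_ne (hne x hx)]; exact hM.notDiag x hx
      · intro x hx z hz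
        rcases Finset.mem_insert.1 hx with rfl | hx
        · rw [Function.update_self, Sym2.mem_iff] at hz
          rcases hz with rfl | rfl
          · exact ⟨ha, hwa⟩
          · exact ⟨hb, hwb⟩
        · rw [Function.update_of_ne (hne x hx)] at hz; exact hM.mem x hx z hz
    have := hmax _ ⟨_, this⟩
    rw [Finset.card_insert_of_notMem hwM] at this
    omega
  have hJE : Ein J S < d * S.card := by
    by_contra h
    push Not at h
    exact hG (hM.TM (hd J S hS h))
  have hGE : Ein G (S ∪ M) < d * (S ∪ M).card := by
    by_contra h
    push Not at h
    exact hG ((hd G (S ∪ M) (hS.mono Finset.subset_union_left) h).mono (Set.subset_univ _))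
  have hMc : M.card < d * S.card := hM.card_le.trans_lt hJE
  have hsum1 : ∑ v ∈ S, (M.filter (fun w => G.Adj v w)).card ≤ Ein G (S ∪ M) := by
    unfold Ein
    calc _ ≤ ∑ v ∈ S, ((S ∪ M).filter (fun w => G.Adj v w)).card :=
          Finset.sum_le_sum (fun v _ =>
            Finset.card_le_card (Finset.filter_subset_filter _ Finset.subset_union_right))
      _ ≤ _ := Finset.sum_le_sum_of_subset Finset.subset_union_left
  have hlt : ∑ v ∈ S, (2 * (S.filter (fun w => J.Adj v w)).card +
      (M.filter (fun w => G.Adj v w)).card) < ∑ v ∈ S, (2 * d + d * (1 + d)) := by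
    rw [Finset.sum_add_distrib, ← Finset.mul_sum, Finset.sum_const, smul_eq_mul]
    have hJE' : ∑ v ∈ S, (S.filter (fun w => J.Adj v w)).card < d * S.card := by
      unfold Ein at hJE
      convert hJE using 1
    have h1 : (S ∪ M).card ≤ S.card + d * S.card :=
      (Finset.card_union_le _ _).trans (by omega)
    have h2 : d * (S ∪ M).card ≤ d * (S.card + d * S.card) := Nat.mul_le_mul_left _ h1
    have h3 : S.card * (2 * d + d * (1 + d)) = 2 * (d * S.card) + d * (S.card + d * S.card) := by
      ring
    omega
  obtain ⟨v, hv, hlt⟩ := Finset.exists_lt_of_sum_lt hlt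
  refine ⟨v, hv, _, _, hlt, ?_, ?_⟩
  · intro u hu hvu
    exact Finset.mem_filter.2 ⟨hu, hvu.ne, hv, hu, Or.inl hvu⟩
  · intro u huS hvu huM a ha hav hua
    refine Finset.mem_filter.2 ⟨ha, hclique u huS ?_ v hv a ha hav.symm hvu.symm hua⟩
    intro h
    exact huM (Finset.mem_filter.2 ⟨h, hvu⟩)

/-! ### Greedy colouring -/

lemma greedy {V : Type*} [Fintype V] (G : SimpleGraph V) (K : ℕ)
    (hgood : ∀ S : Finset V, S.Nonempty → ∃ v ∈ S, ∃ D M : Finset V, 2 * D.card + M.card < K ∧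
      (∀ u ∈ S, G.Adj v u → u ∈ D) ∧
      ∀ u, u ∉ S → G.Adj v u → u ∉ M → ∀ a ∈ S, a ≠ v → G.Adj u a → a ∈ D)
    (L : V → Finset ℕ) (hL : ∀ v, K ≤ (L v).card) (S : Finset V) :
    ∃ (φ : V → ℕ) (l : V → V), (∀ v ∈ S, φ v ∈ L v) ∧
      (∀ u ∈ S, ∀ w ∈ S, G.Adj u w → φ u ≠ φ w) ∧
      ∀ u, (∃ w ∈ S, G.Adj u w) → l u ∈ S ∧ G.Adj u (l u) ∧
        ∀ w ∈ S, G.Adj u w → w ≠ l u → φ w ≠ φ (l u) := by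
  classical
  induction S using Finset.strongInduction with
  | H S ih =>
  rcases S.eq_empty_or_nonempty with rfl | hS
  · exact ⟨fun _ => 0, id, by simp, by simp, by simp⟩
  obtain ⟨v, hv, D, M, hK, hD, hDM⟩ := hgood S hS
  obtain ⟨φ, l, h1, h2, h3⟩ := ih (S.erase v) (Finset.erase_ssubset hv)
  let B : Finset ℕ := D.image φ ∪ D.image (fun u => φ (l u)) ∪ M.image (fun u => φ (l u))
  have hB : B.card < (L v).card := by
    have e1 : B.card ≤ (D.image φ).card + (D.image (fun u => φ (l u))).card +
        (M.image (fun u => φ (l u))).card :=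
      (Finset.card_union_le _ _).trans (Nat.add_le_add_right (Finset.card_union_le _ _) _)
    have e2 : (D.image φ).card ≤ D.card := Finset.card_image_le
    have e3 : (D.image (fun u => φ (l u))).card ≤ D.card := Finset.card_image_le
    have e4 : (M.image (fun u => φ (l u))).card ≤ M.card := Finset.card_image_le
    have := hL v
    omega
  obtain ⟨c, hcL, hcB⟩ := Finset.exists_mem_notMem_of_card_lt_card hB
  have hc1 : ∀ u ∈ S, G.Adj v u → c ≠ φ u := by
    rintro u hu hvu rfl
    exact hcB (Finset.mem_union_left _ (Finset.mem_union_left _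
      (Finset.mem_image_of_mem _ (hD u hu hvu))))
  have hc2 : ∀ u, G.Adj v u → (∃ w ∈ S.erase v, G.Adj u w) → c ≠ φ (l u) := by
    intro u hvu hu hc
    obtain ⟨hl1, hl2, -⟩ := h3 u hu
    apply hcB
    by_cases huS : u ∈ S
    · refine Finset.mem_union_left _ (Finset.mem_union_right _ ?_)
      exact Finset.mem_image.2 ⟨u, hD u huS hvu, hc.symm⟩
    by_cases huM : u ∈ M
    · exact Finset.mem_union_right _ (Finset.mem_image.2 ⟨u, huM, hc.symm⟩)
    · refine Finset.mem_union_left _ (Finset.mem_union_left _ ?_)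
      rw [Finset.mem_erase] at hl1
      exact Finset.mem_image.2 ⟨l u, hDM u huS hvu huM _ hl1.2 hl1.1 hl2, hc.symm⟩
  refine ⟨Function.update φ v c, fun u => if ∃ w ∈ S.erase v, G.Adj u w then l u else v, ?_, ?_, ?_⟩
  · intro w hw
    by_cases hwv : w = v
    · subst hwv; simpa using hcL
    · rw [Function.update_of_ne hwv]; exact h1 w (Finset.mem_erase.2 ⟨hwv, hw⟩)
  · intro u hu w hw huw
    by_cases huv : u = v
    · subst huv
      rw [Function.update_self, Function.update_of_ne huw.ne']
      exact hc1 w hw huw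
    · by_cases hwv : w = v
      · subst hwv
        rw [Function.update_self, Function.update_of_ne huv]
        exact (hc1 u hu huw.symm).symm
      · rw [Function.update_of_ne huv, Function.update_of_ne hwv]
        exact h2 u (Finset.mem_erase.2 ⟨huv, hu⟩) w (Finset.mem_erase.2 ⟨hwv, hw⟩) huw
  · rintro u ⟨w, hw, huw⟩
    by_cases hex : ∃ w ∈ S.erase v, G.Adj u w
    · simp only [if_pos hex]
      obtain ⟨hl1, hl2, hl3⟩ := h3 u hex
      have hlv : l u ≠ v := (Finset.mem_erase.1 hl1).1
      refine ⟨(Finset.mem_erase.1 hl1).2, hl2, ?_⟩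
      intro x hx hux hxl
      rw [Function.update_of_ne hlv]
      by_cases hxv : x = v
      · subst hxv
        rw [Function.update_self]
        exact hc2 u hux.symm hex
      · rw [Function.update_of_ne hxv]
        exact hl3 x (Finset.mem_erase.2 ⟨hxv, hx⟩) hux hxl
    · simp only [if_neg hex]
      have hall : ∀ x ∈ S, G.Adj u x → x = v := by
        intro x hx hux
        by_contra hxv
        exact hex ⟨x, Finset.mem_erase.2 ⟨hxv, hx⟩, hux⟩
      refine ⟨hv, hall w hw huw ▸ huw, fun x hx hux hxv => absurd (hall x hx hux) hxv⟩

theorem stmt0 (WH : Type) [Fintype WH] (H : SimpleGraph WH) :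
    ∃ c : ℝ, ∀ (V : Type) [Fintype V] (G : SimpleGraph V),
      ¬ ContainsSubdivision H G → CFChoosable G c := by
  let d := madc (Fintype.card WH) H.edgeSet.ncard
  refine ⟨((2 * d + d * (1 + d) : ℕ) : ℝ), ?_⟩
  intro V _ G hG L hL
  have hTM : ¬ TM H G Set.univ := fun h => hG h.contains
  obtain ⟨φ, l, h1, h2, h3⟩ := greedy G (2 * d + d * (1 + d))
    (fun S hS => exists_good (d := d) (fun G' A hA hE => mader _ H rfl G' A hA hE) hTM S hS) L
    (fun v => by exact_mod_cast hL v) Finset.univ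
  refine ⟨φ, fun v => h1 v (Finset.mem_univ v),
    fun u w huw => h2 u (Finset.mem_univ u) w (Finset.mem_univ w) huw, ?_⟩
  rintro v ⟨w, hw⟩
  obtain ⟨-, hl2, hl3⟩ := h3 v ⟨w, Finset.mem_univ w, hw⟩
  refine ⟨φ (l v), ?_⟩
  rw [Set.ncard_eq_one]
  refine ⟨l v, ?_⟩
  ext u
  simp only [Set.mem_setOf_eq, Set.mem_singleton_iff]
  constructor
  · rintro ⟨hu, huc⟩
    by_contra hne
    exact hl3 u (Finset.mem_univ u) hu hne huc
  · rintro rfl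
    exact ⟨hl2, rfl⟩

end CFPaper
end

section
/- Let d be a nonnegative integer and let F be a d-degenerate minor-closed family of finite simple graphs. Then every graph G in F is conflict-free (2d+1)-choosable. -/
open SimpleGraph

universe u v

namespace CFPaper

variable {V : Type u} {W : Type v}

/-- Auxiliary form of conflict-freeness: some neighbour has a colour unique in the neighbourhood. -/
def Uniq {V : Type} (H : SimpleGraph V) (φ : V → ℕ) (x : V) : Prop :=
  ∃ y, H.Adj x y ∧ ∀ z, H.Adj x z → φ z = φ y → z = y

theorem conflictFree_of_uniq {V : Type} (H : SimpleGraph V) (φ : V → ℕ)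
    (h : ∀ x, (∃ y, H.Adj x y) → Uniq H φ x) : ConflictFree H φ := by
  intro x hx
  obtain ⟨y, hy⟩ := hx
  obtain ⟨y, hy, hu⟩ := h x ⟨y, hy⟩
  refine ⟨φ y, Set.ncard_eq_one.2 ⟨y, ?_⟩⟩
  ext z
  constructor
  · rintro ⟨h1, h2⟩
    exact hu z h1 h2
  · rintro rfl
    exact ⟨hy, rfl⟩

/-- Extending a colouring of `G - v` to `v`. -/
theorem extend_step {V : Type} [Finite V] (d : ℕ) (G H : SimpleGraph V) (hHG : H ≤ G)
    (L : V → Finset ℕ) (v : V) (hL : 2 * d + 1 ≤ (L v).card)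
    (hv : (G.neighborSet v).ncard ≤ d)
    (φ : V → ℕ) (hφL : ∀ x, x ≠ v → φ x ∈ L x)
    (hprop : ∀ x y, x ≠ v → y ≠ v → G.Adj x y → φ x ≠ φ y)
    (hcf : ∀ x, x ≠ v → (∃ y, y ≠ v ∧ H.Adj x y) →
      ∃ y, y ≠ v ∧ H.Adj x y ∧ ∀ z, z ≠ v → H.Adj x z → φ z = φ y → z = y)
    (hvu : (∃ y, H.Adj v y) → Uniq H φ v) :
    ∃ ψ : V → ℕ, (∀ x, ψ x ∈ L x) ∧ Proper G ψ ∧ ∀ x, (∃ y, H.Adj x y) → Uniq H ψ x := by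
  classical
  have := Fintype.ofFinite V
  have hg : ∀ x, ∃ y, x ≠ v → (∃ y, y ≠ v ∧ H.Adj x y) →
      y ≠ v ∧ H.Adj x y ∧ ∀ z, z ≠ v → H.Adj x z → φ z = φ y → z = y := by
    intro x
    by_cases h : x ≠ v ∧ (∃ y, y ≠ v ∧ H.Adj x y)
    · obtain ⟨y, hy⟩ := hcf x h.1 h.2
      exact ⟨y, fun _ _ => hy⟩
    · exact ⟨x, fun h1 h2 => absurd ⟨h1, h2⟩ h⟩
  choose g hg using hg
  let A : Finset V := (G.neighborSet v).toFinset
  have hA : A.card ≤ d := by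
    rw [← Set.ncard_eq_toFinset_card']
    exact hv
  let B : Finset ℕ := A.image φ ∪ A.image (fun x => φ (g x))
  have hB : B.card < (L v).card := by
    have h1 := Finset.card_union_le (A.image φ) (A.image (fun x => φ (g x)))
    have h2 : (A.image φ).card ≤ A.card := Finset.card_image_le
    have h3 : (A.image (fun x => φ (g x))).card ≤ A.card := Finset.card_image_le
    have h4 : B.card ≤ (A.image φ).card + (A.image (fun x => φ (g x))).card := h1
    omega
  obtain ⟨c, hcL, hcB⟩ := Finset.exists_mem_notMem_of_card_lt_card hB
  have hc1 : ∀ x, G.Adj v x → c ≠ φ x := by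
    rintro x hx rfl
    exact hcB (Finset.mem_union_left _ (Finset.mem_image_of_mem _ (by simpa [A] using hx)))
  have hc2 : ∀ x, G.Adj v x → c ≠ φ (g x) := by
    rintro x hx rfl
    exact hcB (Finset.mem_union_right _ (Finset.mem_image.2 ⟨x, by simpa [A] using hx, rfl⟩))
  let ψ : V → ℕ := fun x => if x = v then c else φ x
  have ψv : ψ v = c := by simp [ψ]
  have ψx : ∀ x, x ≠ v → ψ x = φ x := fun x hx => by simp [ψ, hx]
  refine ⟨ψ, ?_, ?_, ?_⟩
  · intro x
    by_cases h : x = v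
    · subst h; rw [ψv]; exact hcL
    · rw [ψx x h]; exact hφL x h
  · intro x y hxy
    by_cases h : x = v
    · subst h
      rw [ψv, ψx y hxy.ne']
      exact hc1 y hxy
    · by_cases h' : y = v
      · subst h'
        rw [ψv, ψx x h]
        exact (hc1 x hxy.symm).symm
      · rw [ψx x h, ψx y h']
        exact hprop x y h h' hxy
  · intro x hx
    by_cases h : x = v
    · subst h
      obtain ⟨y, hy, hu⟩ := hvu hx
      refine ⟨y, hy, fun z hz hzy => hu z hz ?_⟩
      rwa [ψx z hz.ne', ψx y hy.ne'] at hzy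
    · by_cases h2 : ∃ y, y ≠ v ∧ H.Adj x y
      · obtain ⟨h3, h4, h5⟩ := hg x h h2
        refine ⟨g x, h4, fun z hz hzy => ?_⟩
        rw [ψx _ h3] at hzy
        by_cases hzv : z = v
        · subst hzv
          rw [ψv] at hzy
          exact absurd hzy (hc2 x (hHG hz.symm))
        · rw [ψx z hzv] at hzy
          exact h5 z hzv hz hzy
      · obtain ⟨y, hy⟩ := hx
        push Not at h2
        have hall : ∀ z, H.Adj x z → z = v := fun z hz => by
          by_contra hzv
          exact h2 z hzv hz
        exact ⟨y, hy, fun z hz _ => (hall z hz).trans (hall y hy).symm⟩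

/-- The deletion of `v`, with `w` (if it satisfies `P`) joined to all neighbours of `v`. -/
def contr {V : Type} (G : SimpleGraph V) (v : V) (P : V → Prop) : SimpleGraph {x : V // x ≠ v} :=
  SimpleGraph.fromRel fun x y => G.Adj x y ∨ (P x ∧ G.Adj v y)

theorem contr_minor {V : Type} (G : SimpleGraph V) (v : V) (P : V → Prop)
    (hP : ∀ x, P x → G.Adj v x) (hP1 : ∀ x y, P x → P y → x = y) : IsMinor (contr G v P) G := by
  classical
  refine ⟨fun x => {z | z = x.1 ∨ (P x.1 ∧ z = v)}, ?_, ?_, ?_⟩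
  · rintro ⟨x, hx⟩
    by_cases h : P x
    · have : {z | z = x ∨ (P x ∧ z = v)} = ({x, v} : Set V) := by
        ext z; simp [h]
      change (G.induce {z | z = x ∨ (P x ∧ z = v)}).Connected
      rw [this]
      exact SimpleGraph.induce_pair_connected_of_adj (hP x h).symm
    · have : {z | z = x ∨ (P x ∧ z = v)} = ({x} : Set V) := by
        ext z; simp [h]
      change (G.induce {z | z = x ∨ (P x ∧ z = v)}).Connected
      rw [this]
      have : Subsingleton ({x} : Set V) := inferInstance
      have : Nonempty ({x} : Set V) := inferInstance
      exact ⟨SimpleGraph.Preconnected.of_subsingleton⟩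
  · rintro ⟨a, ha⟩ ⟨b, hb⟩ hab
    rw [Set.disjoint_left]
    rintro z (h1 | ⟨h1, h2⟩) (h3 | ⟨h3, h4⟩)
    · exact hab (Subtype.ext (h1.symm.trans h3))
    · exact ha (h1.symm.trans h4)
    · exact hb (h3.symm.trans h2)
    · exact hab (Subtype.ext (hP1 _ _ h1 h3))
  · rintro ⟨a, ha⟩ ⟨b, hb⟩ hab
    obtain ⟨-, (h | ⟨h, h'⟩) | (h | ⟨h, h'⟩)⟩ := hab
    · exact ⟨a, Or.inl rfl, b, Or.inl rfl, h⟩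
    · exact ⟨v, Or.inr ⟨h, rfl⟩, b, Or.inl rfl, h'⟩
    · exact ⟨a, Or.inl rfl, b, Or.inl rfl, h.symm⟩
    · exact ⟨a, Or.inl rfl, v, Or.inr ⟨h, rfl⟩, h'.symm⟩

theorem main_aux (d : ℕ)
    (F : ∀ (α : Type) [Finite α], SimpleGraph α → Prop)
    (hdeg : ∀ (α : Type) [Finite α] (G : SimpleGraph α), F α G →
      ∀ K : G.Subgraph, K.verts.Nonempty → ∃ v ∈ K.verts, (K.neighborSet v).ncard ≤ d)
    (hmc : ∀ (α β : Type) [Finite α] [Finite β] (G : SimpleGraph α) (H : SimpleGraph β),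
      F α G → IsMinor H G → F β H) (n : ℕ) :
    ∀ (V : Type) [Finite V] (G H : SimpleGraph V), Nat.card V = n → F V G → H ≤ G →
      ∀ L : V → Finset ℕ, (∀ v, 2 * d + 1 ≤ (L v).card) →
      ∃ ψ : V → ℕ, (∀ x, ψ x ∈ L x) ∧ Proper G ψ ∧ ∀ x, (∃ y, H.Adj x y) → Uniq H ψ x := by
  classical
  induction n with
  | zero =>
    intro V _ G H hn _ _ L _
    have : IsEmpty V := by
      rcases Nat.card_eq_zero.1 hn with h | h
      · exact h
      · exact absurd ‹Finite V› (not_finite_iff_infinite.2 h)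
    exact ⟨fun _ => 0, fun x => isEmptyElim x, fun x => isEmptyElim x, fun x => isEmptyElim x⟩
  | succ n ih =>
    intro V _ G H hn hF hHG L hL
    have hne : Nonempty V := by
      by_contra h
      rw [not_nonempty_iff] at h
      rw [Nat.card_of_isEmpty] at hn
      omega
    obtain ⟨v, -, hv⟩ := hdeg V G hF ⊤ ⟨hne.some, trivial⟩
    have hv' : (G.neighborSet v).ncard ≤ d := hv
    have hPex : ∃ P : V → Prop, (∀ x, P x → H.Adj v x) ∧ (∀ x y, P x → P y → x = y) ∧
        ((∃ y, H.Adj v y) → ∃ w, P w) := by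
      by_cases h : ∃ y, H.Adj v y
      · obtain ⟨w, hw⟩ := h
        exact ⟨fun x => x = w, fun x hx => hx ▸ hw, fun x y hx hy => hx.trans hy.symm,
          fun _ => ⟨w, rfl⟩⟩
      · exact ⟨fun _ => False, fun x hx => hx.elim, fun x y hx => hx.elim, fun h' => absurd h' h⟩
    obtain ⟨P, hP1, hP2, hP3⟩ := hPex
    have hcard : Nat.card {x : V // x ≠ v} = n := by
      have := Fintype.ofFinite V
      rw [Nat.card_eq_fintype_card] at hn ⊢
      simp [hn]
    have hle : H.comap (Subtype.val : {x : V // x ≠ v} → V) ≤ contr G v P := by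
      intro x y hxy
      exact ⟨hxy.ne, Or.inl (Or.inl (hHG hxy))⟩
    obtain ⟨φ', h1, h2, h3⟩ := ih {x : V // x ≠ v} (contr G v P)
      (H.comap (Subtype.val : {x : V // x ≠ v} → V)) hcard
      (hmc _ _ G _ hF (contr_minor G v P (fun x hx => hHG (hP1 x hx)) hP2)) hle
      (fun x => L x.1) (fun x => hL x.1)
    let φ : V → ℕ := fun x => if h : x ≠ v then φ' ⟨x, h⟩ else 0
    have hφ : ∀ x (h : x ≠ v), φ x = φ' ⟨x, h⟩ := fun x h => by simp [φ, h]
    refine extend_step d G H hHG L v (hL v) hv' φ ?_ ?_ ?_ ?_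
    · intro x hx
      rw [hφ x hx]
      exact h1 ⟨x, hx⟩
    · intro x y hx hy hxy
      rw [hφ x hx, hφ y hy]
      exact h2 ⟨fun h => hxy.ne (congrArg Subtype.val h), Or.inl (Or.inl hxy)⟩
    · rintro x hx ⟨y, hy, hxy⟩
      obtain ⟨⟨u, hu⟩, hu1, hu2⟩ := h3 ⟨x, hx⟩ ⟨⟨y, hy⟩, hxy⟩
      refine ⟨u, hu, hu1, fun z hz hxz hzu => ?_⟩
      rw [hφ z hz, hφ u hu] at hzu
      exact congrArg Subtype.val (hu2 ⟨z, hz⟩ hxz hzu)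
    · intro hex
      obtain ⟨w, hw⟩ := hP3 hex
      have hvw := hP1 w hw
      refine ⟨w, hvw, fun z hz hzw => ?_⟩
      by_contra hne'
      rw [hφ z hz.ne', hφ w hvw.ne'] at hzw
      exact h2 (u := ⟨z, hz.ne'⟩) (w := ⟨w, hvw.ne'⟩)
        ⟨fun h => hne' (congrArg Subtype.val h), Or.inr (Or.inr ⟨hw, hHG hz⟩)⟩ hzw

theorem stmt1 (d : ℕ)
    (F : ∀ (α : Type) [Finite α], SimpleGraph α → Prop)
    (hdeg : ∀ (α : Type) [Finite α] (G : SimpleGraph α), F α G →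
      ∀ K : G.Subgraph, K.verts.Nonempty → ∃ v ∈ K.verts, (K.neighborSet v).ncard ≤ d)
    (hmc : ∀ (α β : Type) [Finite α] [Finite β] (G : SimpleGraph α) (H : SimpleGraph β),
      F α G → IsMinor H G → F β H)
    (V : Type) [Fintype V] (G : SimpleGraph V) (hG : F V G) :
    CFChoosable G ((2 * d + 1 : ℕ) : ℝ) := by
  intro L hL
  obtain ⟨ψ, h1, h2, h3⟩ := main_aux d F hdeg hmc _ V G G rfl hG le_rfl L
    (fun v => by exact_mod_cast hL v)
  exact ⟨ψ, h1, h2, conflictFree_of_uniq G ψ h3⟩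

end CFPaper
end

section
/- Let w be a positive integer. Every finite simple graph with layered treewidth at most w is conflict-free (8w−1)-choosable. -/
open SimpleGraph

universe u v

namespace CFPaper

variable {V : Type u} {W : Type v}

theorem greedy_aux {V : Type} [Fintype V] (r : V → ℕ) (D : V → Finset V) (L : V → Finset ℕ)
    (hD : ∀ v, ∀ u ∈ D v, r u < r v) (hL : ∀ v, (D v).card < (L v).card) :
    ∃ φ : V → ℕ, ∀ v, φ v ∈ L v ∧ ∀ u ∈ D v, φ u ≠ φ v := by
  classical
  have key : ∀ n : ℕ, ∃ φ : V → ℕ, ∀ v, r v < n → φ v ∈ L v ∧ ∀ u ∈ D v, φ u ≠ φ v := by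
    intro n
    induction n with
    | zero => exact ⟨fun _ => 0, fun v hv => absurd hv (Nat.not_lt_zero _)⟩
    | succ n ih =>
      obtain ⟨φ, hφ⟩ := ih
      have hex : ∀ v, ∃ c, c ∈ L v ∧ c ∉ (D v).image φ := fun v =>
        Finset.exists_mem_notMem_of_card_lt_card (lt_of_le_of_lt Finset.card_image_le (hL v))
      choose c hc1 hc2 using hex
      refine ⟨fun v => if r v = n then c v else φ v, fun v hv => ?_⟩
      by_cases h : r v = n
      · refine ⟨by simpa [h] using hc1 v, fun u hu => ?_⟩
        have hlt := hD v u hu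
        have hne : r u ≠ n := by omega
        simp only [h, hne, if_true, if_false]
        intro he
        exact hc2 v (Finset.mem_image.2 ⟨u, hu, he⟩)
      · have hlt : r v < n := by omega
        refine ⟨by simpa [h] using (hφ v hlt).1, fun u hu => ?_⟩
        have hlt' := hD v u hu
        have hne : r u ≠ n := by omega
        simp only [h, hne, if_false]
        exact (hφ v hlt).2 u hu
  obtain ⟨φ, hφ⟩ := key (Finset.univ.sup r + 1)
  exact ⟨φ, fun v => hφ v (Nat.lt_succ_of_le (Finset.le_sup (Finset.mem_univ v)))⟩

theorem append_path_aux {ι : Type} {T : SimpleGraph ι} (hT : T.Connected) (ρ : ι) (S : Set ι)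
    (hS : (T.induce S).Connected) (x : ι) (hx : x ∈ S) (hmin : ∀ y ∈ S, T.dist ρ x ≤ T.dist ρ y)
    (z : ι) (hz : z ∈ S) :
    ∃ (p : T.Walk ρ x) (q : T.Walk x z), p.length = T.dist ρ x ∧ (p.append q).IsPath ∧
      ∀ y ∈ q.support, y ∈ S := by
  classical
  obtain ⟨p, hp, hpl⟩ := hT.exists_path_of_dist ρ x
  obtain ⟨q0, hq0⟩ := (hS ⟨x, hx⟩ ⟨z, hz⟩).exists_isPath
  obtain ⟨q, hq, hsup⟩ : ∃ q : T.Walk x z, q.IsPath ∧ ∀ y ∈ q.support, y ∈ S := by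
    let f : T.induce S ↪g T := SimpleGraph.Embedding.induce S
    have hq : (q0.map f.toHom).IsPath := hq0.map f.injective
    refine ⟨q0.map f.toHom, hq, ?_⟩
    intro y hy
    have hy' : y ∈ (q0.map f.toHom).support := hy
    rw [SimpleGraph.Walk.support_map, List.mem_map] at hy'
    obtain ⟨a, -, rfl⟩ := hy'
    exact a.2
  refine ⟨p, q, hpl, ?_, hsup⟩
  rw [SimpleGraph.Walk.isPath_def, SimpleGraph.Walk.support_append, List.nodup_append]
  refine ⟨hp.support_nodup, hq.support_nodup.tail, ?_⟩
  rintro a ha b hb rfl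
  have haS := hsup a (List.mem_of_mem_tail hb)
  have h1 : T.dist ρ a ≤ (p.takeUntil a ha).length := SimpleGraph.dist_le _
  have h2 := hmin a haS
  have h3 := congrArg SimpleGraph.Walk.length (p.take_spec ha)
  rw [SimpleGraph.Walk.length_append] at h3
  have h4 : (p.dropUntil a ha).length = 0 := by omega
  have h5 := SimpleGraph.Walk.eq_of_length_eq_zero h4
  subst h5
  have h6 := hq.support_nodup
  rw [SimpleGraph.Walk.support_eq_cons] at h6
  exact (List.nodup_cons.1 h6).1 hb

theorem order_aux {V : Type} [Fintype V] {G : SimpleGraph V} {ι : Type} {T : SimpleGraph ι}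
    {B : ι → Set V} (h : IsTreeDecomp G T B) :
    ∃ (r : V → ℕ) (x : V → ι), Function.Injective r ∧ (∀ v, v ∈ B (x v)) ∧
      ∀ u v z, u ∈ B z → v ∈ B z → r u ≤ r v → u ∈ B (x v) := by
  classical
  obtain ⟨ρ⟩ := h.tree.connected.nonempty
  have hex : ∀ v, ∃ x, v ∈ B x ∧ ∀ y, v ∈ B y → T.dist ρ x ≤ T.dist ρ y := by
    intro v
    have hne : {x : ι | v ∈ B x}.Nonempty := by
      obtain ⟨a⟩ := (h.bags_connected v).nonempty
      exact ⟨a.1, a.2⟩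
    have := Function.argminOn_mem (T.dist ρ) {x : ι | v ∈ B x} hne
    exact ⟨_, this, fun y hy => Function.argminOn_le (T.dist ρ) _ hy⟩
  choose x hx hmin using hex
  let e := Fintype.equivFin V
  set n := Fintype.card V with hn
  refine ⟨fun v => n * T.dist ρ (x v) + e v, x, ?_, hx, ?_⟩
  · intro u v huv
    have h1 := congrArg (· % n) huv
    simp only [Nat.mul_add_mod, Nat.mod_eq_of_lt (e u).2, Nat.mod_eq_of_lt (e v).2] at h1
    exact e.injective (Fin.ext h1)
  · intro u v z hu hv hr
    have hpos : 0 < n := (e u).pos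
    have hd : T.dist ρ (x u) ≤ T.dist ρ (x v) := by
      have := Nat.div_le_div_right (c := n) hr
      simpa [Nat.mul_add_div hpos, Nat.div_eq_of_lt (e u).2, Nat.div_eq_of_lt (e v).2] using this
    obtain ⟨p1, q1, hl1, hp1, hs1⟩ := append_path_aux h.tree.connected ρ {y | u ∈ B y}
      (h.bags_connected u) (x u) (hx u) (hmin u) z hu
    obtain ⟨p2, q2, hl2, hp2, hs2⟩ := append_path_aux h.tree.connected ρ {y | v ∈ B y}
      (h.bags_connected v) (x v) (hx v) (hmin v) z hv
    have heq : p1.append q1 = p2.append q2 := by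
      have := h.tree.isAcyclic.path_unique ⟨_, hp1⟩ ⟨_, hp2⟩
      exact congrArg Subtype.val this
    have hg := congrArg (fun w => w.getVert (T.dist ρ (x v))) heq
    simp only [SimpleGraph.Walk.getVert_append, hl1, hl2, lt_irrefl, if_false, Nat.sub_self,
      SimpleGraph.Walk.getVert_zero, not_lt.2 hd] at hg
    have := hs1 _ (q1.getVert_mem_support (T.dist ρ (x v) - T.dist ρ (x u)))
    rw [hg] at this
    exact this

theorem stmt2 (w : ℕ) (hw : 0 < w) (V : Type) [Fintype V] (G : SimpleGraph V)
    (h : ∃ (Vl : ℕ → Set V) (ι : Type) (_ : Fintype ι) (T : SimpleGraph ι) (B : ι → Set V),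
      IsLayering G Vl ∧ IsTreeDecomp G T B ∧ ∀ (i : ℕ) (x : ι), (Vl i ∩ B x).ncard ≤ w) :
    CFChoosable G ((8 * w - 1 : ℕ) : ℝ) := by
  classical
  obtain ⟨Vl, ι, -, T, B, ⟨hcov, hdisj, hlay⟩, hTD, hw'⟩ := h
  obtain ⟨r, x, hrinj, hx, hr⟩ := order_aux hTD
  choose l hl using hcov
  have hluniq : ∀ v i, v ∈ Vl i → l v = i := by
    intro v i hi
    by_contra hne
    exact Set.disjoint_left.1 (hdisj hne) (hl v) hi
  have hladj : ∀ a b, G.Adj a b → l a ≤ l b + 1 := by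
    intro a b hab
    obtain ⟨i, ha, hb⟩ := hlay hab
    rcases ha with ha | ha <;> rcases hb with hb | hb <;>
      rw [hluniq a _ ha, hluniq b _ hb] <;> omega
  intro L hL
  have hL' : ∀ v, 8 * w - 1 ≤ (L v).card := fun v => by exact_mod_cast hL v
  have hπ : ∀ u, ∃ y, (G.neighborSet u).Nonempty → G.Adj u y ∧ ∀ y', G.Adj u y' → r y ≤ r y' := by
    intro u
    by_cases hne : (G.neighborSet u).Nonempty
    · exact ⟨Function.argminOn r _ hne, fun _ => ⟨Function.argminOn_mem r _ hne,
        fun y' hy' => Function.argminOn_le r _ hy'⟩⟩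
    · exact ⟨u, fun h => absurd h hne⟩
  choose π hπ using hπ
  let C : ℕ → V → Finset V := fun i v => Finset.univ.filter fun y => l y = i ∧ y ∈ B (x v)
  have hC : ∀ i v, (C i v).card ≤ w := by
    intro i v
    refine le_trans (le_of_eq ?_) (hw' i (x v))
    rw [← Set.ncard_coe_finset]
    congr 1
    ext y
    simp only [C, Finset.coe_filter, Finset.mem_univ, true_and, Set.mem_setOf_eq, Set.mem_inter_iff]
    exact and_congr_left fun _ => ⟨fun h => h ▸ hl y, hluniq y i⟩
  let A : V → Finset V := fun v => Finset.univ.filter fun u => G.Adj u v ∧ r u < r v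
  let P : V → Finset V := fun v =>
    Finset.univ.filter fun y => r y < r v ∧ ∃ u, G.Adj u v ∧ y = π u
  let M : V → Finset V := fun v => (C (l v - 1) v ∪ C (l v) v ∪ C (l v + 1) v).erase v
  let E : V → Finset V := fun v => C (l v - 2) v ∪ C (l v + 2) v
  have hAM : ∀ v, A v ⊆ M v := by
    intro v u hu
    simp only [A, Finset.mem_filter, Finset.mem_univ, true_and] at hu
    obtain ⟨z, hz1, hz2⟩ := hTD.edge_in_bag hu.1
    have hB := hr u v z hz1 hz2 hu.2.le
    have h1 := hladj _ _ hu.1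
    have h2 := hladj _ _ hu.1.symm
    simp only [M, C, Finset.mem_erase, Finset.mem_union, Finset.mem_filter, Finset.mem_univ,
      true_and, hB, and_true]
    exact ⟨hu.1.ne, by omega⟩
  have hPM : ∀ v, P v ⊆ (A v).image π ∪ (M v ∪ E v) := by
    intro v y hy
    simp only [P, Finset.mem_filter, Finset.mem_univ, true_and] at hy
    obtain ⟨hyv, u, huv, rfl⟩ := hy
    rw [Finset.mem_union]
    by_cases hlt : r u < r v
    · exact Or.inl (Finset.mem_image_of_mem _ (by simp [A, huv, hlt]))
    · right
      have hπu := (hπ u ⟨v, huv⟩).1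
      obtain ⟨z, hz1, hz2⟩ := hTD.edge_in_bag huv
      obtain ⟨z', hz1', hz2'⟩ := hTD.edge_in_bag hπu
      have hvu := hr v u z hz2 hz1 (by omega)
      have hyu := hr (π u) u z' hz2' hz1' (by omega)
      have hB := hr (π u) v (x u) hyu hvu hyv.le
      have h1 := hladj _ _ huv
      have h2 := hladj _ _ huv.symm
      have h3 := hladj _ _ hπu
      have h4 := hladj _ _ hπu.symm
      have hne : π u ≠ v := fun h => by rw [h] at hyv; exact lt_irrefl _ hyv
      simp only [M, E, C, Finset.mem_erase, Finset.mem_union, Finset.mem_filter, Finset.mem_univ,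
        true_and, hB, and_true, hne, ne_eq, not_false_eq_true]
      omega
  have hMc : ∀ v, (M v).card + 1 ≤ 3 * w := by
    intro v
    have hv : v ∈ C (l v - 1) v ∪ C (l v) v ∪ C (l v + 1) v := by
      simp [C, hx v]
    have h0 := Finset.card_erase_add_one hv
    have h1 := Finset.card_union_le (C (l v - 1) v ∪ C (l v) v) (C (l v + 1) v)
    have h2 := Finset.card_union_le (C (l v - 1) v) (C (l v) v)
    have h3 := hC (l v - 1) v
    have h4 := hC (l v) v
    have h5 := hC (l v + 1) v
    change ((C (l v - 1) v ∪ C (l v) v ∪ C (l v + 1) v).erase v).card + 1 ≤ _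
    omega
  have hEc : ∀ v, (E v).card ≤ 2 * w := by
    intro v
    have h2 := Finset.card_union_le (C (l v - 2) v) (C (l v + 2) v)
    have h3 := hC (l v - 2) v
    have h5 := hC (l v + 2) v
    change (C (l v - 2) v ∪ C (l v + 2) v).card ≤ _
    omega
  obtain ⟨φ, hφ⟩ := greedy_aux r (fun v => A v ∪ P v) L (by
      intro v u hu
      rw [Finset.mem_union] at hu
      rcases hu with hu | hu
      · exact (Finset.mem_filter.1 hu).2.2
      · exact (Finset.mem_filter.1 hu).2.1) (by
      intro v
      have hsub : A v ∪ P v ⊆ (A v).image π ∪ (M v ∪ E v) :=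
        Finset.union_subset ((hAM v).trans (Finset.subset_union_left.trans
          Finset.subset_union_right)) (hPM v)
      have h1 := Finset.card_le_card hsub
      have h2 := Finset.card_union_le ((A v).image π) (M v ∪ E v)
      have h3 := Finset.card_union_le (M v) (E v)
      have h4 : ((A v).image π).card ≤ (A v).card := Finset.card_image_le
      have h5 := Finset.card_le_card (hAM v)
      have h6 := hMc v
      have h7 := hEc v
      have h8 := hL' v
      omega)
  refine ⟨φ, fun v => (hφ v).1, ?_, ?_⟩
  · intro u v huv
    rcases lt_or_gt_of_ne (fun h => huv.ne (hrinj h)) with hlt | hlt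
    · exact (hφ v).2 u (Finset.mem_union_left _ (by simp [A, huv, hlt]))
    · exact ((hφ u).2 v (Finset.mem_union_left _ (by simp [A, huv.symm, hlt]))).symm
  · intro u hu
    obtain ⟨h1, h2⟩ := hπ u hu
    refine ⟨φ (π u), Set.ncard_eq_one.2 ⟨π u, ?_⟩⟩
    ext v
    simp only [Set.mem_setOf_eq, Set.mem_singleton_iff]
    constructor
    · rintro ⟨huv, hc⟩
      by_contra hne
      have hlt : r (π u) < r v :=
        lt_of_le_of_ne (h2 v huv) (fun h => hne (hrinj h).symm)
      exact (hφ v).2 (π u) (Finset.mem_union_right _ (by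
        simp only [P, Finset.mem_filter, Finset.mem_univ, true_and]
        exact ⟨hlt, u, huv, rfl⟩)) hc.symm
    · rintro rfl
      exact ⟨h1, rfl⟩

end CFPaper
end

section
/- Let S be a set of positive integers and t a nonnegative integer. Let G_1 and G_2 be finite simple graphs; for each i ∈ {1,2}, let Q_i be a clique in G_i with |Q_1| = |Q_2| = t, and let C_i be a collection of subsets of V(G_i) with Q_i ∈ C_i. Let ι be a bijection from Q_1 to Q_2, and for each i let L_i be a list-assignment of G_i such that L_1(x) = L_2(ι(x)) for every x ∈ Q_1. Let G be a (Q_1,Q_2,ι)-sum of G_1 and G_2 and let L be the list-assignment of G obtained by this (Q_1,Q_2,ι)-sum. If G_1 is (S,C_1,L_1,t_1)-extendable and G_2 is (S,C_2,L_2,t_2)-extendable for some integers t_1 ≥ t and t_2 ≥ t, then G is (S, C_1 ∪ C_2, L, min{t_1,t_2})-extendable. -/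
open SimpleGraph

universe u v

namespace CFPaper

variable {V : Type u} {W : Type v}

/-- One half of the sum lemma: the precolored clique lies inside the first side. -/
theorem ext_aux (S : Set ℕ)
    (V₁ V₂ U : Type) [Fintype V₁] [Fintype V₂] [Fintype U]
    (G₁ : SimpleGraph V₁) (G₂ : SimpleGraph V₂)
    (Q₁ : Set V₁) (Q₂ : Set V₂)
    (hQ₁ : G₁.IsClique Q₁) (hQ₂ : G₂.IsClique Q₂)
    (C₁ : Set (Set V₁)) (C₂ : Set (Set V₂)) (hC₁ : Q₁ ∈ C₁) (hC₂ : Q₂ ∈ C₂)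
    (L₁ : V₁ → Finset ℕ) (L₂ : V₂ → Finset ℕ)
    (G : SimpleGraph U) (e₁ : V₁ → U) (e₂ : V₂ → U)
    (he₁ : Function.Injective e₁) (he₂ : Function.Injective e₂)
    (hcover : ∀ u : U, (∃ x, e₁ x = u) ∨ (∃ y, e₂ y = u))
    (hglue : ∀ (x : V₁) (y : V₂), e₁ x = e₂ y → (x ∈ Q₁ ∧ y ∈ Q₂))
    (hg1 : ∀ x ∈ Q₁, ∃ y ∈ Q₂, e₁ x = e₂ y)
    (hg2 : ∀ y ∈ Q₂, ∃ x ∈ Q₁, e₁ x = e₂ y)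
    (hadj1 : ∀ x x' : V₁, ¬(x ∈ Q₁ ∧ x' ∈ Q₁) → (G.Adj (e₁ x) (e₁ x') ↔ G₁.Adj x x'))
    (hadj2 : ∀ y y' : V₂, ¬(y ∈ Q₂ ∧ y' ∈ Q₂) → (G.Adj (e₂ y) (e₂ y') ↔ G₂.Adj y y'))
    (hnocross : ∀ (x : V₁) (y : V₂), x ∉ Q₁ → y ∉ Q₂ → ¬ G.Adj (e₁ x) (e₂ y))
    (L : U → Finset ℕ) (hLe₁ : ∀ x : V₁, L (e₁ x) = L₁ x) (hLe₂ : ∀ y : V₂, L (e₂ y) = L₂ y)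
    (t₁ t₂ : ℕ) (ht₂ : Q₂.ncard ≤ t₂)
    (hext₁ : Extendable S G₁ C₁ L₁ t₁) (hext₂ : Extendable S G₂ C₂ L₂ t₂)
    (Wc : Set U) (hWc : G.IsClique Wc) (hWt : Wc.ncard ≤ t₁) (hWr : ∀ w ∈ Wc, ∃ x, e₁ x = w)
    (H : SimpleGraph U) (hHG : H ≤ G)
    (hHC : Compatible ((fun c => e₁ '' c) '' C₁ ∪ (fun c => e₂ '' c) '' C₂) H)
    (φW : U → ℕ) (hφL : ∀ w ∈ Wc, φW w ∈ L w)
    (hφp : ∀ a ∈ Wc, ∀ b ∈ Wc, G.Adj a b → φW a ≠ φW b)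
    (f : U → ℕ) (g : U → Bool) :
    ∃ φ : U → ℕ, (∀ w, φ w ∈ L w) ∧ Proper G φ ∧ (∀ w ∈ Wc, φ w = φW w) ∧
    (∀ w ∈ Wc, g w = false → ∀ u : U, G.Adj w u → u ∉ Wc → φ u ≠ f w) ∧
    (∀ w : U, (w ∉ Wc ∨ (w ∈ Wc ∧ g w = true)) →
      (((G \ H).neighborSet w = ∅) ∨
        ∃ c : ℕ, {u : U | (G \ H).Adj w u ∧ φ u = c}.ncard ∈ S)) := by
  classical
  have hG1 : ∀ x x', G.Adj (e₁ x) (e₁ x') → G₁.Adj x x' := by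
    intro x x' h
    by_cases hq : x ∈ Q₁ ∧ x' ∈ Q₁
    · exact hQ₁ hq.1 hq.2 (fun h' => h.ne (by rw [h']))
    · exact (hadj1 x x' hq).1 h
  have hG2 : ∀ y y', G.Adj (e₂ y) (e₂ y') → G₂.Adj y y' := by
    intro x x' h
    by_cases hq : x ∈ Q₂ ∧ x' ∈ Q₂
    · exact hQ₂ hq.1 hq.2 (fun h' => h.ne (by rw [h']))
    · exact (hadj2 x x' hq).1 h
  let H₁ : SimpleGraph V₁ :=
    { Adj := fun x x' => G₁.Adj x x' ∧ (G.Adj (e₁ x) (e₁ x') → H.Adj (e₁ x) (e₁ x'))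
      symm := ⟨fun x x' h => ⟨h.1.symm, fun h' => (h.2 h'.symm).symm⟩⟩
      loopless := ⟨fun x h => h.1.ne rfl⟩ }
  let H₂ : SimpleGraph V₂ :=
    { Adj := fun y y' => G₂.Adj y y' ∧ ((y ∈ Q₂ ∧ y' ∈ Q₂) ∨ H.Adj (e₂ y) (e₂ y'))
      symm := ⟨fun x x' h => ⟨h.1.symm, h.2.imp (fun a => a.symm) (fun a => a.symm)⟩⟩
      loopless := ⟨fun x h => h.1.ne rfl⟩ }
  have hD1 : ∀ x x', (G₁ \ H₁).Adj x x' ↔ (G \ H).Adj (e₁ x) (e₁ x') := by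
    intro x x'
    have := hG1 x x'
    simp only [SimpleGraph.sdiff_adj, H₁]
    tauto
  have hD2 : ∀ y y', (G₂ \ H₂).Adj y y' ↔ (¬(y ∈ Q₂ ∧ y' ∈ Q₂) ∧ (G \ H).Adj (e₂ y) (e₂ y')) := by
    intro y y'
    have := hadj2 y y'
    simp only [SimpleGraph.sdiff_adj, H₂]
    tauto
  have hC1 : Compatible C₁ H₁ := by
    intro a b hab
    by_cases hq : a ∈ Q₁ ∧ b ∈ Q₁
    · exact ⟨Q₁, hC₁, hq⟩
    have hH := hab.2 ((hadj1 a b hq).2 hab.1)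
    obtain ⟨c, hc, hac, hbc⟩ := hHC hH
    rcases hc with ⟨d, hd, rfl⟩ | ⟨d, hd, rfl⟩
    · exact ⟨d, hd, (he₁.mem_set_image).1 hac, (he₁.mem_set_image).1 hbc⟩
    · obtain ⟨y, -, hy⟩ := hac
      obtain ⟨y', -, hy'⟩ := hbc
      exact absurd ⟨(hglue a y hy.symm).1, (hglue b y' hy'.symm).1⟩ hq
  have hC2 : Compatible C₂ H₂ := by
    intro a b hab
    by_cases hq : a ∈ Q₂ ∧ b ∈ Q₂
    · exact ⟨Q₂, hC₂, hq⟩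
    have hH := hab.2.resolve_left hq
    obtain ⟨c, hc, hac, hbc⟩ := hHC hH
    rcases hc with ⟨d, hd, rfl⟩ | ⟨d, hd, rfl⟩
    · obtain ⟨y, -, hy⟩ := hac
      obtain ⟨y', -, hy'⟩ := hbc
      exact absurd ⟨(hglue y a hy).2, (hglue y' b hy').2⟩ hq
    · exact ⟨d, hd, (he₂.mem_set_image).1 hac, (he₂.mem_set_image).1 hbc⟩
  obtain ⟨φ₁, h1L, h1P, h1W, h1f, h1S⟩ := hext₁ (e₁ ⁻¹' Wc)
    (by
      intro a ha b hb hab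
      exact hG1 a b (hWc ha hb (fun h => hab (he₁ h))))
    (by
      refine le_trans ?_ hWt
      rw [← Set.ncard_image_of_injective _ he₁]
      exact Set.ncard_le_ncard (Set.image_preimage_subset _ _) (Set.toFinite _))
    H₁ (fun a b h => h.1) hC1 (fun x => φW (e₁ x))
    (fun w hw => by rw [← hLe₁]; exact hφL _ hw)
    (fun a ha b hb hab => hφp _ ha _ hb
      (hWc ha hb (fun h => hab.ne (he₁ h))))
    (fun x => f (e₁ x)) (fun x => g (e₁ x))
  -- a color function on the first side
  have hc : ∃ c : U → ℕ, ∀ x, (e₁ x ∉ Wc ∨ (e₁ x ∈ Wc ∧ g (e₁ x) = true)) →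
      ((G₁ \ H₁).neighborSet x = ∅ ∨
        {u : V₁ | (G₁ \ H₁).Adj x u ∧ φ₁ u = c (e₁ x)}.ncard ∈ S) := by
    have : ∀ x, ∃ c : ℕ, (e₁ x ∉ Wc ∨ (e₁ x ∈ Wc ∧ g (e₁ x) = true)) →
      ((G₁ \ H₁).neighborSet x = ∅ ∨
        {u : V₁ | (G₁ \ H₁).Adj x u ∧ φ₁ u = c}.ncard ∈ S) := by
      intro x
      by_cases hx : (e₁ x ∉ Wc ∨ (e₁ x ∈ Wc ∧ g (e₁ x) = true))
      · rcases h1S x hx with h | ⟨c, h⟩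
        · exact ⟨0, fun _ => Or.inl h⟩
        · exact ⟨c, fun _ => Or.inr h⟩
      · exact ⟨0, fun h => absurd h hx⟩
    choose c hc using this
    refine ⟨Function.extend e₁ c 0, fun x hx => ?_⟩
    rw [he₁.extend_apply]
    exact hc x hx
  obtain ⟨c, hc⟩ := hc
  have hψ : ∃ ψ : U → ℕ, ∀ x, ψ (e₁ x) = φ₁ x :=
    ⟨Function.extend e₁ φ₁ 0, fun x => he₁.extend_apply _ _ _⟩
  obtain ⟨ψ, hψ⟩ := hψ
  let B : V₂ → Prop := fun y => e₂ y ∈ Wc ∧ g (e₂ y) = false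
  obtain ⟨φ₂, h2L, h2P, h2W, h2f, h2S⟩ := hext₂ Q₂ hQ₂ ht₂ H₂ (fun a b h => h.1) hC2
    (fun y => ψ (e₂ y))
    (by
      intro w hw
      obtain ⟨x, hx, hxw⟩ := hg2 w hw
      simp only [← hLe₂, ← hxw, hψ, hLe₁]
      exact h1L x)
    (by
      intro a ha b hb hab
      obtain ⟨x, hx, hxa⟩ := hg2 a ha
      obtain ⟨x', hx', hxb⟩ := hg2 b hb
      simp only [← hxa, ← hxb, hψ]
      refine h1P (hQ₁ hx hx' ?_)
      rintro rfl
      exact hab.ne (he₂ (hxa.symm.trans hxb)))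
    (fun y => if B y then f (e₂ y) else c (e₂ y))
    (fun y => decide (¬ B y ∧ ∀ x, e₁ x = e₂ y → (G₁ \ H₁).neighborSet x = ∅))
  have hφ : ∃ φ : U → ℕ, (∀ x, φ (e₁ x) = φ₁ x) ∧ (∀ y, φ (e₂ y) = φ₂ y) := by
    refine ⟨Function.extend e₂ φ₂ ψ, fun x => ?_, fun y => he₂.extend_apply _ _ _⟩
    by_cases hx : ∃ y, e₂ y = e₁ x
    · obtain ⟨y, hy⟩ := hx
      rw [← hy, he₂.extend_apply, h2W y (hglue x y hy.symm).2]
      simp only [hy, hψ]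
    · rw [Function.extend_apply' _ _ _ hx, hψ]
  obtain ⟨φ, hφ1, hφ2⟩ := hφ
  -- an edge of G lies on one of the sides
  have hside : ∀ u w, G.Adj u w → (∃ x x', e₁ x = u ∧ e₁ x' = w) ∨
      (∃ y y', e₂ y = u ∧ e₂ y' = w) := by
    intro u w h
    rcases hcover u with ⟨x, rfl⟩ | ⟨y, rfl⟩ <;> rcases hcover w with ⟨x', rfl⟩ | ⟨y', rfl⟩
    · exact Or.inl ⟨_, _, rfl, rfl⟩
    · by_cases hx : x ∈ Q₁
      · obtain ⟨y, -, hy⟩ := hg1 x hx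
        exact Or.inr ⟨y, y', hy.symm, rfl⟩
      · by_cases hy : y' ∈ Q₂
        · obtain ⟨x', -, hx'⟩ := hg2 y' hy
          exact Or.inl ⟨x, x', rfl, hx'⟩
        · exact absurd h (hnocross _ _ hx hy)
    · by_cases hx : x' ∈ Q₁
      · obtain ⟨y', -, hy⟩ := hg1 x' hx
        exact Or.inr ⟨y, y', rfl, hy.symm⟩
      · by_cases hy : y ∈ Q₂
        · obtain ⟨x, -, hx'⟩ := hg2 y hy
          exact Or.inl ⟨x, x', hx', rfl⟩
        · exact absurd h.symm (hnocross _ _ hx hy)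
    · exact Or.inr ⟨_, _, rfl, rfl⟩
  refine ⟨φ, ?_, ?_, ?_, ?_, ?_⟩
  · intro w
    rcases hcover w with ⟨x, rfl⟩ | ⟨y, rfl⟩
    · rw [hφ1, hLe₁]; exact h1L x
    · rw [hφ2, hLe₂]; exact h2L y
  · intro u w h
    rcases hside u w h with ⟨x, x', rfl, rfl⟩ | ⟨y, y', rfl, rfl⟩
    · rw [hφ1, hφ1]; exact h1P (hG1 _ _ h)
    · rw [hφ2, hφ2]; exact h2P (hG2 _ _ h)
  · intro w hw
    obtain ⟨x, rfl⟩ := hWr w hw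
    rw [hφ1]; exact h1W x hw
  · intro w hw hgw u hwu hu
    by_cases hu1 : ∃ x', e₁ x' = u
    · obtain ⟨x', rfl⟩ := hu1
      obtain ⟨x, rfl⟩ := hWr w hw
      rw [hφ1]
      exact h1f x hw hgw x' (hG1 _ _ hwu) hu
    · rcases hside w u hwu with ⟨x, x', -, h⟩ | ⟨y, y', rfl, rfl⟩
      · exact absurd ⟨x', h⟩ hu1
      · have hy' : y' ∉ Q₂ := fun h => by
          obtain ⟨x, -, hx⟩ := hg2 y' h
          exact hu1 ⟨x, hx⟩
        obtain ⟨x, hx⟩ := hWr _ hw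
        have hy : y ∈ Q₂ := (hglue _ _ hx).2
        have hB : B y := ⟨hw, hgw⟩
        have := h2f y hy (by simp [hB]) y' (hG2 _ _ hwu) hy'
        rw [hφ2]
        simpa [hB] using this
  · intro w hw
    -- transfer from a side
    have T1 : ∀ x k, e₁ x = w → (∀ u, (G \ H).Adj w u → φ u = k → ∃ x', e₁ x' = u) →
        {u : V₁ | (G₁ \ H₁).Adj x u ∧ φ₁ u = k}.ncard ∈ S →
        {u : U | (G \ H).Adj w u ∧ φ u = k}.ncard ∈ S := by
      rintro x k rfl hall hS
      rw [← Set.ncard_image_of_injective _ he₁] at hS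
      convert hS using 2
      ext u
      constructor
      · rintro ⟨h1, h2⟩
        obtain ⟨x', rfl⟩ := hall u h1 h2
        exact ⟨x', ⟨(hD1 _ _).2 h1, by rw [← hφ1]; exact h2⟩, rfl⟩
      · rintro ⟨x', ⟨h1, h2⟩, rfl⟩
        exact ⟨(hD1 _ _).1 h1, by rw [hφ1]; exact h2⟩
    have T2 : ∀ y, e₂ y = w → (∀ u, (G \ H).Adj w u → ∃ y', e₂ y' = u ∧ ¬ (y ∈ Q₂ ∧ y' ∈ Q₂)) →
        ((G₂ \ H₂).neighborSet y = ∅ ∨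
          ∃ k, {u : V₂ | (G₂ \ H₂).Adj y u ∧ φ₂ u = k}.ncard ∈ S) →
        ((G \ H).neighborSet w = ∅ ∨ ∃ k, {u : U | (G \ H).Adj w u ∧ φ u = k}.ncard ∈ S) := by
      rintro y rfl hall (hE | ⟨k, hS⟩)
      · left
        ext u
        simp only [SimpleGraph.mem_neighborSet, Set.mem_empty_iff_false, iff_false]
        intro h
        obtain ⟨y', rfl, hn⟩ := hall u h
        have : y' ∈ (G₂ \ H₂).neighborSet y := (hD2 _ _).2 ⟨hn, h⟩
        rw [hE] at this
        exact this
      · right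
        refine ⟨k, ?_⟩
        rw [← Set.ncard_image_of_injective _ he₂] at hS
        convert hS using 2
        ext u
        constructor
        · rintro ⟨h1, h2⟩
          obtain ⟨y', rfl, hn⟩ := hall u h1
          exact ⟨y', ⟨(hD2 _ _).2 ⟨hn, h1⟩, by rw [← hφ2]; exact h2⟩, rfl⟩
        · rintro ⟨y', ⟨h1, h2⟩, rfl⟩
          exact ⟨((hD2 _ _).1 h1).2, by rw [hφ2]; exact h2⟩
    by_cases hw1 : ∃ x, e₁ x = w
    · obtain ⟨x, hx⟩ := hw1
      by_cases hq : x ∈ Q₁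
      · obtain ⟨y, hy, hxy⟩ := hg1 x hq
        have hnB : ¬ B y := by
          rintro ⟨hB1, hB2⟩
          rw [← hxy, hx] at hB1 hB2
          rcases hw with h | ⟨-, h⟩
          · exact h hB1
          · simp [hB2] at h
        by_cases hE : (G₁ \ H₁).neighborSet x = ∅
        · refine T2 y (hxy.symm.trans hx) ?_ (h2S y (Or.inr ⟨hy, ?_⟩))
          · intro u hu
            have hnu : ¬ ∃ x', e₁ x' = u := by
              rintro ⟨x', rfl⟩
              have : x' ∈ (G₁ \ H₁).neighborSet x := (hD1 _ _).2 (by rw [hx]; exact hu)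
              rw [hE] at this
              exact this
            obtain ⟨y', rfl⟩ := (hcover u).resolve_left hnu
            refine ⟨y', rfl, fun h => ?_⟩
            obtain ⟨x', -, hx'⟩ := hg2 y' h.2
            exact hnu ⟨x', hx'⟩
          · rw [decide_eq_true_eq]
            refine ⟨hnB, fun x' hx' => ?_⟩
            rwa [he₁ (hx'.trans hxy.symm)]
        · right
          have hS := (hc x (by rw [hx]; exact hw)).resolve_left hE
          refine ⟨c (e₁ x), T1 x _ hx ?_ hS⟩
          intro u hu hcu
          by_contra hnu
          obtain ⟨y', rfl⟩ := (hcover u).resolve_left hnu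
          have hy' : y' ∉ Q₂ := fun h => by
            obtain ⟨x', -, hx'⟩ := hg2 y' h
            exact hnu ⟨x', hx'⟩
          have := h2f y hy (by
            rw [decide_eq_false_iff_not]
            exact fun h => hE (h.2 x hxy)) y' (hG2 _ _ (by rw [← hxy, hx]; exact hu.1)) hy'
          rw [if_neg hnB, ← hxy, ← hφ2] at this
          exact this hcu
      · have hall : ∀ u, (G \ H).Adj w u → ∃ x', e₁ x' = u := by
          intro u hu
          rcases hside w u hu.1 with ⟨_, x', -, h⟩ | ⟨y, _, h, -⟩
          · exact ⟨x', h⟩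
          · exact absurd (hglue x y (hx.trans h.symm)).1 hq
        rcases hc x (by rw [hx]; exact hw) with hE | hS
        · left
          ext u
          simp only [SimpleGraph.mem_neighborSet, Set.mem_empty_iff_false, iff_false]
          intro h
          obtain ⟨x', rfl⟩ := hall u h
          have : x' ∈ (G₁ \ H₁).neighborSet x := (hD1 _ _).2 (by rw [hx]; exact h)
          rw [hE] at this
          exact this
        · exact Or.inr ⟨_, T1 x _ hx (fun u hu _ => hall u hu) hS⟩
    · obtain ⟨y, hy⟩ := (hcover w).resolve_left hw1
      have hyQ : y ∉ Q₂ := fun h => by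
        obtain ⟨x', -, hx'⟩ := hg2 y h
        exact hw1 ⟨x', hx'.trans hy⟩
      refine T2 y hy ?_ (h2S y (Or.inl hyQ))
      intro u hu
      rcases hside w u hu.1 with ⟨x, _, h, -⟩ | ⟨_, y', -, h⟩
      · exact absurd ⟨x, h⟩ hw1
      · exact ⟨y', h, fun h => hyQ h.1⟩

theorem stmt7 (S : Set ℕ) (hSpos : ∀ s ∈ S, 0 < s) (t : ℕ)
    (V₁ V₂ U : Type) [Fintype V₁] [Fintype V₂] [Fintype U]
    (G₁ : SimpleGraph V₁) (G₂ : SimpleGraph V₂)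
    (Q₁ : Set V₁) (Q₂ : Set V₂)
    (hQ₁ : G₁.IsClique Q₁) (hQ₂ : G₂.IsClique Q₂)
    (hc₁ : Q₁.ncard = t) (hc₂ : Q₂.ncard = t)
    (C₁ : Set (Set V₁)) (C₂ : Set (Set V₂)) (hC₁ : Q₁ ∈ C₁) (hC₂ : Q₂ ∈ C₂)
    (ι : V₁ → V₂) (hιQ : ∀ x ∈ Q₁, ι x ∈ Q₂) (hιinj : Set.InjOn ι Q₁)
    (hιsurj : ∀ y ∈ Q₂, ∃ x ∈ Q₁, ι x = y)
    (L₁ : V₁ → Finset ℕ) (L₂ : V₂ → Finset ℕ) (hL : ∀ x ∈ Q₁, L₁ x = L₂ (ι x))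
    (G : SimpleGraph U) (e₁ : V₁ → U) (e₂ : V₂ → U)
    (he₁ : Function.Injective e₁) (he₂ : Function.Injective e₂)
    (hcover : ∀ u : U, (∃ x, e₁ x = u) ∨ (∃ y, e₂ y = u))
    (hglue : ∀ (x : V₁) (y : V₂), e₁ x = e₂ y ↔ (x ∈ Q₁ ∧ ι x = y))
    (hadj1 : ∀ x x' : V₁, ¬(x ∈ Q₁ ∧ x' ∈ Q₁) → (G.Adj (e₁ x) (e₁ x') ↔ G₁.Adj x x'))
    (hadj2 : ∀ y y' : V₂, ¬(y ∈ Q₂ ∧ y' ∈ Q₂) → (G.Adj (e₂ y) (e₂ y') ↔ G₂.Adj y y'))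
    (hnocross : ∀ (x : V₁) (y : V₂), x ∉ Q₁ → y ∉ Q₂ → ¬ G.Adj (e₁ x) (e₂ y))
    (L : U → Finset ℕ) (hLe₁ : ∀ x : V₁, L (e₁ x) = L₁ x) (hLe₂ : ∀ y : V₂, L (e₂ y) = L₂ y)
    (t₁ t₂ : ℕ) (ht₁ : t ≤ t₁) (ht₂ : t ≤ t₂)
    (hext₁ : Extendable S G₁ C₁ L₁ t₁) (hext₂ : Extendable S G₂ C₂ L₂ t₂) :
    Extendable S G ((fun c => e₁ '' c) '' C₁ ∪ (fun c => e₂ '' c) '' C₂) L (min t₁ t₂) := by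
  have hgl : ∀ x y, e₁ x = e₂ y → (x ∈ Q₁ ∧ y ∈ Q₂) := by
    intro x y h
    obtain ⟨h1, rfl⟩ := (hglue x y).1 h
    exact ⟨h1, hιQ x h1⟩
  have hg1 : ∀ x ∈ Q₁, ∃ y ∈ Q₂, e₁ x = e₂ y :=
    fun x hx => ⟨ι x, hιQ x hx, (hglue _ _).2 ⟨hx, rfl⟩⟩
  have hg2 : ∀ y ∈ Q₂, ∃ x ∈ Q₁, e₁ x = e₂ y := by
    intro y hy
    obtain ⟨x, hx, h⟩ := hιsurj y hy
    exact ⟨x, hx, (hglue _ _).2 ⟨hx, h⟩⟩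
  intro Wc hWc hWt H hHG hHC φW hφL hφp f g
  by_cases hW : ∀ w ∈ Wc, ∃ x, e₁ x = w
  · exact ext_aux S V₁ V₂ U G₁ G₂ Q₁ Q₂ hQ₁ hQ₂ C₁ C₂ hC₁ hC₂ L₁ L₂ G e₁ e₂ he₁ he₂ hcover
      hgl hg1 hg2 hadj1 hadj2 hnocross L hLe₁ hLe₂ t₁ t₂ (hc₂ ▸ ht₂) hext₁ hext₂ Wc hWc
      (hWt.trans (min_le_left _ _)) hW H hHG hHC φW hφL hφp f g
  · have hW2 : ∀ w ∈ Wc, ∃ y, e₂ y = w := by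
      push Not at hW
      obtain ⟨v, hv, hnv⟩ := hW
      obtain ⟨y, rfl⟩ := (hcover v).resolve_left (fun ⟨x, hx⟩ => hnv x hx)
      have hy : y ∉ Q₂ := fun h => by
        obtain ⟨x, -, hx⟩ := hg2 y h
        exact hnv x hx
      intro w hw
      by_contra hn
      obtain ⟨x, rfl⟩ := (hcover w).resolve_right hn
      have hx : x ∉ Q₁ := fun h => by
        obtain ⟨y', -, hy'⟩ := hg1 x h
        exact hn ⟨y', hy'.symm⟩
      exact hnocross x y hx hy (hWc hw hv (hnv x))
    refine ext_aux S V₂ V₁ U G₂ G₁ Q₂ Q₁ hQ₂ hQ₁ C₂ C₁ hC₂ hC₁ L₂ L₁ G e₂ e₁ he₂ he₁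
      (fun u => (hcover u).symm)
      (fun x y h => (hgl y x h.symm).symm) (fun y hy => ?_) (fun x hx => ?_) hadj2 hadj1
      (fun y x hy hx h => hnocross x y hx hy h.symm) L hLe₂ hLe₁ t₂ t₁ (hc₁ ▸ ht₁) hext₂ hext₁
      Wc hWc (hWt.trans (min_le_right _ _)) hW2 H hHG (by rw [Set.union_comm]; exact hHC)
      φW hφL hφp f g
    · obtain ⟨x, hx, h⟩ := hg2 y hy
      exact ⟨x, hx, h.symm⟩
    · obtain ⟨y, hy, h⟩ := hg1 x hx
      exact ⟨y, hy, h.symm⟩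

end CFPaper
end

section
/- Let S be a set of positive integers and ξ a nonnegative integer. Let G be a finite simple graph, let T = (B_x : x ∈ V(T)) be a tree-decomposition of G with adhesion at most ξ, and let L be a list-assignment of G. If T is L-extendable, i.e. for every node x the torso R_x at x is (S, C_x, L|_{V(R_x)}, ξ)-extendable where C_x is the frame at x, then G is (S, ∅, L, ξ)-extendable. -/
open SimpleGraph

universe u v

namespace CFPaper

variable {V : Type u} {W : Type v}

/-- Torso adjacency, on the level of `V`. -/
def TR (G : SimpleGraph V) {ι : Type*} (T : SimpleGraph ι) (B : ι → Set V) (y : ι) (a b : V) :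
    Prop :=
  a ≠ b ∧ (G.Adj a b ∨ ∃ z : ι, T.Adj y z ∧ a ∈ B z ∧ b ∈ B z)

theorem torso_adj (G : SimpleGraph V) {ι : Type*} (T : SimpleGraph ι) (B : ι → Set V) (y : ι)
    (a b : B y) : (torso G T B y).Adj a b ↔ TR G T B y a b := by
  unfold torso TR
  rw [SimpleGraph.fromRel_adj]
  constructor
  · rintro ⟨h, (h1 | ⟨z, hz, h1, h2⟩) | (h1 | ⟨z, hz, h1, h2⟩)⟩
    · exact ⟨fun e => h (Subtype.ext e), Or.inl h1⟩
    · exact ⟨fun e => h (Subtype.ext e), Or.inr ⟨z, hz, h1, h2⟩⟩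
    · exact ⟨fun e => h (Subtype.ext e), Or.inl h1.symm⟩
    · exact ⟨fun e => h (Subtype.ext e), Or.inr ⟨z, hz, h2, h1⟩⟩
  · rintro ⟨h, h1⟩
    exact ⟨fun e => h (congrArg Subtype.val e), Or.inl h1⟩

theorem local_ext (S : Set ℕ) (ξ : ℕ) (G : SimpleGraph V)
    {ι : Type*} (T : SimpleGraph ι) (B : ι → Set V) (L : V → Finset ℕ) (y : ι)
    (hext : Extendable S (torso G T B y) (frame G T B y) (fun a => L (a : V)) ξ)
    (A : Set V) (hAB : A ⊆ B y) (hcl : ∀ a ∈ A, ∀ b ∈ A, a ≠ b → TR G T B y a b)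
    (hcard : A.ncard ≤ ξ) (φA : V → ℕ) (hL : ∀ a ∈ A, φA a ∈ L a)
    (hprop : ∀ a ∈ A, ∀ b ∈ A, TR G T B y a b → φA a ≠ φA b) (f : V → ℕ) (g : V → Bool) :
    ∃ ψ : V → ℕ, (∀ w ∈ B y, ψ w ∈ L w) ∧
      (∀ a ∈ B y, ∀ b ∈ B y, TR G T B y a b → ψ a ≠ ψ b) ∧
      (∀ w ∈ A, ψ w = φA w) ∧
      (∀ w ∈ A, g w = false → ∀ u ∈ B y, TR G T B y w u → u ∉ A → ψ u ≠ f w) ∧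
      ∀ w ∈ B y, (w ∉ A ∨ g w = true) → (∀ u ∈ B y, ¬ G.Adj w u) ∨
        ∃ c, {u | (u ∈ B y ∧ G.Adj w u) ∧ ψ u = c}.ncard ∈ S := by
  classical
  have hadj : ∀ a b : B y, (torso G T B y \ (torso G T B y \ G.comap Subtype.val)).Adj a b ↔
      G.Adj (a : V) b := by
    intro a b
    simp only [SimpleGraph.sdiff_adj, SimpleGraph.comap_adj, torso_adj, TR]
    constructor
    · rintro ⟨h1, h2⟩
      by_contra h3
      exact h2 ⟨h1, h3⟩
    · exact fun h => ⟨⟨h.ne, Or.inl h⟩, fun h' => h'.2 h⟩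
  obtain ⟨ψ, h1, h2, h3, h4, h5⟩ := hext (Subtype.val ⁻¹' A)
    (by
      intro a ha b hb hab
      rw [torso_adj]
      exact hcl a ha b hb (fun e => hab (Subtype.ext e)))
    (by
      refine le_trans (le_of_eq ?_) hcard
      exact Set.ncard_preimage_of_injective_subset_range Subtype.val_injective (by simpa using hAB))
    (torso G T B y \ G.comap Subtype.val) sdiff_le
    (by
      intro a b hab
      rw [SimpleGraph.sdiff_adj, torso_adj] at hab
      obtain ⟨⟨_, h | ⟨z, hz, ha, hb⟩⟩, h'⟩ := hab
      · exact absurd h h'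
      · exact ⟨_, ⟨z, hz, rfl⟩, ha, hb⟩)
    (fun a => φA a) (fun w hw => hL w hw)
    (fun a ha b hb hab => hprop a ha b hb ((torso_adj G T B y a b).1 hab))
    (fun a => f a) (fun a => g a)
  refine ⟨fun v => if h : v ∈ B y then ψ ⟨v, h⟩ else 0, ?_, ?_, ?_, ?_, ?_⟩
  · intro w hw
    simpa [hw] using h1 ⟨w, hw⟩
  · intro a ha b hb hab
    simpa [ha, hb] using h2 ((torso_adj G T B y ⟨a, ha⟩ ⟨b, hb⟩).2 hab)
  · intro w hw
    simpa [hAB hw] using h3 ⟨w, hAB hw⟩ hw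
  · intro w hw hg u hu hwu huA
    simpa [hu] using h4 ⟨w, hAB hw⟩ hw hg ⟨u, hu⟩ ((torso_adj G T B y ⟨w, hAB hw⟩ ⟨u, hu⟩).2 hwu) huA
  · intro w hw hwA
    rcases h5 ⟨w, hw⟩ (by
      by_cases hA : w ∈ A
      · exact Or.inr ⟨hA, by tauto⟩
      · exact Or.inl hA) with h | ⟨c, hc⟩
    · left
      intro u hu hwu
      have : (⟨u, hu⟩ : B y) ∈ (torso G T B y \ (torso G T B y \ G.comap Subtype.val)).neighborSet ⟨w, hw⟩ :=
        (hadj ⟨w, hw⟩ ⟨u, hu⟩).2 hwu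
      rw [h] at this
      exact this
    · right
      refine ⟨c, ?_⟩
      convert hc using 1
      rw [← Set.ncard_image_of_injective _ Subtype.val_injective]
      congr 1
      ext u
      simp only [Set.mem_setOf_eq, Set.mem_image, hadj]
      constructor
      · rintro ⟨⟨hu, hwu⟩, he⟩
        exact ⟨⟨u, hu⟩, ⟨hwu, by simpa [hu] using he⟩, rfl⟩
      · rintro ⟨⟨u, hu⟩, ⟨hwu, he⟩, rfl⟩
        exact ⟨⟨hu, hwu⟩, by simpa [hu] using he⟩

theorem grow (G : SimpleGraph V) {ι : Type*} [Finite ι] (T : SimpleGraph ι) (B : ι → Set V)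
    (hTD : IsTreeDecomp G T B) (r : ι) (P : Set ι → Prop) (h0 : P {r})
    (step : ∀ (X : Set ι) (x y : ι), x ∈ X → y ∉ X → T.Adj x y →
      (∀ v, ∀ z ∈ X, v ∈ B z → v ∈ B y → v ∈ B x) → P X → P (insert y X)) : P Set.univ := by
  classical
  let F : Set (Set ι) := {X | (r ∈ X ∧ ∀ z ∈ X, ∃ p : T.Walk r z, ∀ c ∈ p.support, c ∈ X) ∧ P X}
  have hne : F.Nonempty := ⟨{r}, ⟨rfl, by
    rintro z rfl
    exact ⟨.nil, by simp⟩⟩, h0⟩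
  obtain ⟨X, ⟨⟨hr, hX⟩, hP⟩, hmax⟩ := (Set.toFinite F).exists_maximal hne
  by_cases hu : X = Set.univ
  · exact hu ▸ hP
  exfalso
  obtain ⟨z, hz⟩ := (Set.ne_univ_iff_exists_notMem X).1 hu
  obtain ⟨q⟩ := hTD.tree.connected.preconnected r z
  obtain ⟨d, -, hd1, hd2⟩ := q.exists_boundary_dart X hr hz
  obtain ⟨⟨x, y⟩, hxy⟩ := d
  simp only at hd1 hd2
  obtain ⟨px, hpx⟩ := hX x hd1
  have hins : insert y X ∈ F := by
    refine ⟨⟨Or.inr hr, ?_⟩, step X x y hd1 hd2 hxy ?_ hP⟩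
    · rintro z (rfl | hz)
      · refine ⟨px.concat hxy, ?_⟩
        intro c hc
        rw [SimpleGraph.Walk.support_concat] at hc
        simp at hc
        rcases hc with hc | hc
        · exact Or.inr (hpx c hc)
        · exact Or.inl hc
      · obtain ⟨p, hp⟩ := hX z hz
        exact ⟨p, fun c hc => Or.inr (hp c hc)⟩
    · intro v z hzX hvz hvy
      obtain ⟨pz, hpz⟩ := hX z hzX
      let p1 : T.Walk z x := (pz.reverse.append px).bypass
      have hp1 : ∀ c ∈ p1.support, c ∈ X := by
        intro c hc
        have := SimpleGraph.Walk.support_bypass_subset _ hc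
        rw [SimpleGraph.Walk.mem_support_append_iff, SimpleGraph.Walk.support_reverse] at this
        rcases this with h | h
        · exact hpz c (by simpa using h)
        · exact hpx c h
      have hp1p : (p1.concat hxy).IsPath :=
        (SimpleGraph.Walk.bypass_isPath _).concat (fun h => hd2 (hp1 _ h)) hxy
      obtain ⟨w⟩ := (hTD.bags_connected v).preconnected ⟨z, hvz⟩ ⟨y, hvy⟩
      let w' : T.Walk z y := w.map (SimpleGraph.Embedding.induce {x : ι | v ∈ B x}).toHom
      have hw' : ∀ c ∈ w'.bypass.support, v ∈ B c := by
        intro c hc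
        have := SimpleGraph.Walk.support_bypass_subset _ hc
        change c ∈ (w.map (SimpleGraph.Embedding.induce {x : ι | v ∈ B x}).toHom).support at this
        rw [SimpleGraph.Walk.support_map, List.mem_map] at this
        obtain ⟨⟨c', hc'⟩, -, rfl⟩ := this
        exact hc'
      have heq : p1.concat hxy = w'.bypass := congrArg Subtype.val
        (hTD.tree.isAcyclic.path_unique ⟨_, hp1p⟩ ⟨_, w'.bypass_isPath⟩)
      apply hw'
      rw [← heq]
      rw [SimpleGraph.Walk.support_concat]
      simp
  exact hd2 (hmax hins (Set.subset_insert _ _) (Set.mem_insert _ _))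

theorem helly (G : SimpleGraph V) {ι : Type*} [Finite ι] (T : SimpleGraph ι) (B : ι → Set V)
    (hTD : IsTreeDecomp G T B) (A : Set V) (hA : G.IsClique A) : ∃ x, A ⊆ B x := by
  obtain ⟨r⟩ := hTD.tree.connected.nonempty
  have key := grow G T B hTD r
    (fun X => (∀ a ∈ A, ∀ b ∈ A, ∃ x ∈ X, a ∈ B x ∧ b ∈ B x) → ∃ x ∈ X, A ⊆ B x) ?_ ?_ ?_
  · obtain ⟨x, -, hx⟩ := key
    exact ⟨x, hx⟩
  · intro h
    refine ⟨r, rfl, fun a ha => ?_⟩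
    obtain ⟨x, rfl, hx, -⟩ := h a ha a ha
    exact hx
  · intro X x y hx hy hxy hkey ih h
    by_cases hAy : A ⊆ B y
    · exact ⟨y, Or.inl rfl, hAy⟩
    · obtain ⟨w, hw, hwy⟩ := Set.not_subset.1 hAy
      have hU : ∀ a ∈ A, ∃ z ∈ X, a ∈ B z := by
        intro a ha
        obtain ⟨z, rfl | hz, haz, hwz⟩ := h a ha w hw
        · exact absurd hwz hwy
        · exact ⟨z, hz, haz⟩
      obtain ⟨z, hz, hAz⟩ := ih (by
        intro a ha b hb
        obtain ⟨z, rfl | hz, haz, hbz⟩ := h a ha b hb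
        · obtain ⟨za, hza, haza⟩ := hU a ha
          obtain ⟨zb, hzb, hbzb⟩ := hU b hb
          exact ⟨x, hx, hkey a za hza haza haz, hkey b zb hzb hbzb hbz⟩
        · exact ⟨z, hz, haz, hbz⟩)
      exact ⟨z, Or.inr hz, hAz⟩
  · intro a ha b hb
    by_cases hab : a = b
    · subst hab
      obtain ⟨⟨x, hx⟩⟩ := (hTD.bags_connected a).nonempty
      exact ⟨x, trivial, hx, hx⟩
    · obtain ⟨x, h1, h2⟩ := hTD.edge_in_bag (hA ha hb hab)
      exact ⟨x, trivial, h1, h2⟩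

/-- Adjacency of `G` inside the bags indexed by `X`. -/
def AdjIn (G : SimpleGraph V) {ι : Type*} (B : ι → Set V) (X : Set ι) (a b : V) : Prop :=
  G.Adj a b ∧ ∃ x ∈ X, a ∈ B x ∧ b ∈ B x

/-- Invariant of the construction: `φ` is a good colouring of the bags indexed by `X`. -/
structure Good (S : Set ℕ) (G : SimpleGraph V) {ι : Type*} (T : SimpleGraph ι) (B : ι → Set V)
    (L : V → Finset ℕ) (A : Set V) (φA f : V → ℕ) (g : V → Bool) (X : Set ι) (φ : V → ℕ) :
    Prop where
  cover : ∀ a ∈ A, ∃ x ∈ X, a ∈ B x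
  list : ∀ x ∈ X, ∀ w ∈ B x, φ w ∈ L w
  proper : ∀ x ∈ X, ∀ a ∈ B x, ∀ b ∈ B x, TR G T B x a b → φ a ≠ φ b
  extend : ∀ a ∈ A, φ a = φA a
  avoid : ∀ w ∈ A, g w = false → ∀ u, AdjIn G B X w u → u ∉ A → φ u ≠ f w
  achieve : ∀ x ∈ X, ∀ w ∈ B x, (w ∉ A ∨ g w = true) → (∀ u, ¬ AdjIn G B X w u) ∨
    ∃ c, {u | AdjIn G B X w u ∧ φ u = c}.ncard ∈ S

theorem good_step (S : Set ℕ) (ξ : ℕ) (G : SimpleGraph V) {ι : Type*} (T : SimpleGraph ι)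
    (B : ι → Set V) (L : V → Finset ℕ)
    (hadh : ∀ ⦃x y : ι⦄, T.Adj x y → (B x ∩ B y).ncard ≤ ξ)
    (hext : ∀ x : ι, Extendable S (torso G T B x) (frame G T B x) (fun a => L (a : V)) ξ)
    (A : Set V) (φA f : V → ℕ) (g : V → Bool) (X : Set ι) (x y : ι) (hx : x ∈ X)
    (hxy : T.Adj x y) (hkey : ∀ v, ∀ z ∈ X, v ∈ B z → v ∈ B y → v ∈ B x)
    (φ : V → ℕ) (hφ : Good S G T B L A φA f g X φ) :
    ∃ φ', Good S G T B L A φA f g (insert y X) φ' := by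
  classical
  have hsel : ∀ w : V, ∃ p : Bool × ℕ, w ∈ B x →
      ((w ∈ A ∧ g w = false) ∧ p.1 = false ∧ p.2 = f w) ∨
      ((w ∉ A ∨ g w = true) ∧ ((p.1 = true ∧ ∀ u, ¬ AdjIn G B X w u) ∨
        (p.1 = false ∧ {u | AdjIn G B X w u ∧ φ u = p.2}.ncard ∈ S))) := by
    intro w
    by_cases hw : w ∈ B x
    · by_cases hs : w ∈ A ∧ g w = false
      · exact ⟨(false, f w), fun _ => Or.inl ⟨hs, rfl, rfl⟩⟩
      · have hs' : w ∉ A ∨ g w = true := by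
          by_cases hwA : w ∈ A
          · right
            by_contra hg
            exact hs ⟨hwA, by simpa using hg⟩
          · exact Or.inl hwA
        rcases hφ.achieve x hx w hw hs' with h | ⟨c, hc⟩
        · exact ⟨(true, 0), fun _ => Or.inr ⟨hs', Or.inl ⟨rfl, h⟩⟩⟩
        · exact ⟨(false, c), fun _ => Or.inr ⟨hs', Or.inr ⟨rfl, hc⟩⟩⟩
    · exact ⟨(false, 0), fun h => absurd h hw⟩
  choose p hp using hsel
  obtain ⟨ψ, h1, h2, h3, h4, h5⟩ := local_ext S ξ G T B L y (hext y) (B x ∩ B y)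
    Set.inter_subset_right
    (fun a ha b hb hab => ⟨hab, Or.inr ⟨x, hxy.symm, ha.1, hb.1⟩⟩)
    (hadh hxy) φ (fun a ha => hφ.list x hx a ha.1)
    (fun a ha b hb hab => hφ.proper x hx a ha.1 b hb.1 ⟨hab.1, Or.inr ⟨y, hxy, ha.2, hb.2⟩⟩)
    (fun w => (p w).2) (fun w => (p w).1)
  let φ' : V → ℕ := fun v => if v ∈ B y then ψ v else φ v
  have hy' : ∀ v ∈ B y, φ' v = ψ v := fun v hv => if_pos hv
  have hX' : ∀ z ∈ X, ∀ v ∈ B z, φ' v = φ v := by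
    intro z hz v hv
    by_cases hvy : v ∈ B y
    · rw [hy' v hvy]
      exact h3 v ⟨hkey v z hz hv hvy, hvy⟩
    · exact if_neg hvy
  have hadjX : ∀ w u, AdjIn G B X w u → φ' u = φ u := by
    rintro w u ⟨-, z, hz, -, hu⟩
    exact hX' z hz u hu
  have hadj : ∀ w u, AdjIn G B (insert y X) w u ↔
      AdjIn G B X w u ∨ (w ∈ B y ∧ u ∈ B y ∧ G.Adj w u) := by
    intro w u
    constructor
    · rintro ⟨h, z, rfl | hz, hw, hu⟩
      · exact Or.inr ⟨hw, hu, h⟩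
      · exact Or.inl ⟨h, z, hz, hw, hu⟩
    · rintro (⟨h, z, hz, hw, hu⟩ | ⟨hw, hu, h⟩)
      · exact ⟨h, z, Or.inr hz, hw, hu⟩
      · exact ⟨h, y, Or.inl rfl, hw, hu⟩
  refine ⟨φ', ?_, ?_, ?_, ?_, ?_, ?_⟩
  · intro a ha
    obtain ⟨z, hz, h⟩ := hφ.cover a ha
    exact ⟨z, Or.inr hz, h⟩
  · rintro z (rfl | hz) w hw
    · rw [hy' w hw]
      exact h1 w hw
    · rw [hX' z hz w hw]
      exact hφ.list z hz w hw
  · rintro z (rfl | hz) a ha b hb hab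
    · rw [hy' a ha, hy' b hb]
      exact h2 a ha b hb hab
    · rw [hX' z hz a ha, hX' z hz b hb]
      exact hφ.proper z hz a ha b hb hab
  · intro a ha
    obtain ⟨z, hz, h⟩ := hφ.cover a ha
    rw [hX' z hz a h]
    exact hφ.extend a ha
  · intro w hw hg u hwu huA
    rcases (hadj w u).1 hwu with h | ⟨hwy, huy, h⟩
    · rw [hadjX w u h]
      exact hφ.avoid w hw hg u h huA
    · obtain ⟨z, hz, hwz⟩ := hφ.cover w hw
      have hwx := hkey w z hz hwz hwy
      by_cases hux : u ∈ B x
      · rw [hX' x hx u hux]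
        exact hφ.avoid w hw hg u ⟨h, x, hx, hwx, hux⟩ huA
      · rw [hy' u huy]
        rcases hp w hwx with ⟨-, e1, e2⟩ | ⟨h', -⟩
        · rw [← e2]
          exact h4 w ⟨hwx, hwy⟩ e1 u huy ⟨h.ne, Or.inl h⟩ (fun hh => hux hh.1)
        · rcases h' with h' | h'
          · exact absurd hw h'
          · rw [hg] at h'
            cases h'
  · intro z hz w hwz hs
    by_cases hwy : w ∈ B y
    · have fresh : (∀ u, ¬ AdjIn G B X w u) → (w ∉ B x ∩ B y ∨ (p w).1 = true) →
          (∀ u, ¬ AdjIn G B (insert y X) w u) ∨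
            ∃ c, {u | AdjIn G B (insert y X) w u ∧ φ' u = c}.ncard ∈ S := by
        intro hno hc
        have hiff : ∀ u, AdjIn G B (insert y X) w u ↔ (u ∈ B y ∧ G.Adj w u) := by
          intro u
          rw [hadj]
          have := hno u
          tauto
        rcases h5 w hwy hc with h | ⟨c, hc⟩
        · left
          intro u hu
          obtain ⟨ha, hb⟩ := (hiff u).1 hu
          exact h u ha hb
        · right
          refine ⟨c, ?_⟩
          convert hc using 2
          ext u
          simp only [Set.mem_setOf_eq, hiff]
          constructor
          · rintro ⟨h, e⟩
            exact ⟨h, by rw [← hy' u h.1]; exact e⟩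
          · rintro ⟨h, e⟩
            exact ⟨h, by rw [hy' u h.1]; exact e⟩
      by_cases hwx : w ∈ B x
      · rcases hp w hwx with ⟨hA, -⟩ | ⟨-, ⟨e, hno⟩ | ⟨e, hc⟩⟩
        · rcases hs with hs | hs
          · exact absurd hA.1 hs
          · rw [hA.2] at hs
            cases hs
        · exact fresh hno (Or.inr e)
        · right
          refine ⟨(p w).2, ?_⟩
          convert hc using 2
          ext u
          simp only [Set.mem_setOf_eq]
          constructor
          · rintro ⟨h, e'⟩
            have hX : AdjIn G B X w u := by
              rcases (hadj w u).1 h with h | ⟨-, huy, h⟩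
              · exact h
              · by_cases hux : u ∈ B x
                · exact ⟨h, x, hx, hwx, hux⟩
                · rw [hy' u huy] at e'
                  exact absurd e' (h4 w ⟨hwx, hwy⟩ e u huy ⟨h.ne, Or.inl h⟩ (fun hh => hux hh.1))
            exact ⟨hX, by rw [← hadjX w u hX]; exact e'⟩
          · rintro ⟨h, e'⟩
            exact ⟨(hadj w u).2 (Or.inl h), by rw [hadjX w u h]; exact e'⟩
      · refine fresh ?_ (Or.inl fun h => hwx h.1)
        rintro u ⟨-, z', hz', hw', -⟩
        exact hwx (hkey w z' hz' hw' hwy)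
    · have hzX : z ∈ X := by
        rcases hz with rfl | hz
        · exact absurd hwz hwy
        · exact hz
      have hiff : ∀ u, AdjIn G B (insert y X) w u ↔ AdjIn G B X w u := by
        intro u
        rw [hadj]
        tauto
      rcases hφ.achieve z hzX w hwz hs with h | ⟨c, hc⟩
      · left
        intro u hu
        exact h u ((hiff u).1 hu)
      · right
        refine ⟨c, ?_⟩
        convert hc using 2
        ext u
        simp only [Set.mem_setOf_eq, hiff]
        constructor
        · rintro ⟨h, e⟩
          exact ⟨h, by rw [← hadjX w u h]; exact e⟩
        · rintro ⟨h, e⟩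
          exact ⟨h, by rw [hadjX w u h]; exact e⟩

theorem stmt8 (S : Set ℕ) (hSpos : ∀ s ∈ S, 0 < s) (ξ : ℕ)
    (V : Type) [Fintype V] (G : SimpleGraph V)
    (ι : Type) [Fintype ι] (T : SimpleGraph ι) (B : ι → Set V)
    (hTD : IsTreeDecomp G T B)
    (hadh : ∀ ⦃x y : ι⦄, T.Adj x y → (B x ∩ B y).ncard ≤ ξ)
    (L : V → Finset ℕ)
    (hext : ∀ x : ι, Extendable S (torso G T B x) (frame G T B x) (fun a => L (a : V)) ξ) :
    Extendable S G (∅ : Set (Set V)) L ξ := by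
  intro A hA hcard H hHG hH φA hL hprop f g
  have hHbot : ∀ a b, ¬ H.Adj a b := by
    intro a b hab
    obtain ⟨c, hc, -⟩ := hH hab
    exact hc
  obtain ⟨r, hr⟩ := helly G T B hTD A hA
  obtain ⟨φ, hφ⟩ := grow G T B hTD r (fun X => ∃ φ, Good S G T B L A φA f g X φ)
    (by
      obtain ⟨ψ, h1, h2, h3, h4, h5⟩ := local_ext S ξ G T B L r (hext r) A hr
        (fun a ha b hb hab => ⟨hab, Or.inl (hA ha hb hab)⟩) hcard φA hL
        (fun a ha b hb hab => hprop a ha b hb (hA ha hb hab.1)) f g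
      refine ⟨ψ, ?_, ?_, ?_, h3, ?_, ?_⟩
      · exact fun a ha => ⟨r, rfl, hr ha⟩
      · rintro x rfl
        exact h1
      · rintro x rfl
        exact h2
      · rintro w hw hg u ⟨h, x, rfl, hwx, hux⟩ huA
        exact h4 w hw hg u hux ⟨h.ne, Or.inl h⟩ huA
      · rintro x rfl w hw hs
        rcases h5 w hw hs with h | ⟨c, hc⟩
        · left
          rintro u ⟨h', z, rfl, -, hu⟩
          exact h u hu h'
        · right
          refine ⟨c, ?_⟩
          convert hc using 2
          ext u
          simp [AdjIn, hw, and_comm])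
    (by
      rintro X x y hx hy hxy hkey ⟨φ, hφ⟩
      exact good_step S ξ G T B L hadh hext A φA f g X x y hx hxy hkey φ hφ)
  have hbag : ∀ v, ∃ x, v ∈ B x := by
    intro v
    obtain ⟨⟨x, hx⟩⟩ := (hTD.bags_connected v).nonempty
    exact ⟨x, hx⟩
  have hiff : ∀ a b, AdjIn G B Set.univ a b ↔ G.Adj a b := by
    intro a b
    constructor
    · exact fun h => h.1
    · intro h
      obtain ⟨x, h1, h2⟩ := hTD.edge_in_bag h
      exact ⟨h, x, trivial, h1, h2⟩
  refine ⟨φ, ?_, ?_, hφ.extend, ?_, ?_⟩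
  · intro w
    obtain ⟨x, hx⟩ := hbag w
    exact hφ.list x trivial w hx
  · intro a b hab
    obtain ⟨x, h1, h2⟩ := hTD.edge_in_bag hab
    exact hφ.proper x trivial a h1 b h2 ⟨hab.ne, Or.inl hab⟩
  · intro w hw hg u hwu huA
    exact hφ.avoid w hw hg u ((hiff w u).2 hwu) huA
  · intro w hs
    obtain ⟨x, hx⟩ := hbag w
    rcases hφ.achieve x trivial w hx (hs.imp id And.right) with h | ⟨c, hc⟩
    · left
      ext u
      simp only [SimpleGraph.mem_neighborSet, SimpleGraph.sdiff_adj, Set.mem_empty_iff_false,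
        iff_false]
      exact fun h' => h u ((hiff w u).2 h'.1)
    · right
      refine ⟨c, ?_⟩
      convert hc using 2
      ext u
      simp [hiff, hHbot]


end CFPaper
end

section
/- Let S be a set of positive integers with 1 ∈ S, let G be a finite simple graph, let k and c be nonnegative integers, and let Y ⊆ V(G) with |Y| ≤ k. If G−X is S-achieved c-choosable (respectively, properly S-achieved c-colorable) for every set X with Y ⊆ X ⊆ V(G) and |X| ≤ 2|Y|, then G is S-achieved (c+2k)-choosable (respectively, properly S-achieved (c+2k)-colorable). -/
open SimpleGraph

universe u v

namespace CFPaper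

variable {V : Type u} {W : Type v}

lemma glue_aux (S : Set ℕ) (h1 : 1 ∈ S) {V : Type} (G : SimpleGraph V) (X : Set V)
    (hX : ∀ v ∈ X, (G.neighborSet v).Nonempty → ∃ u ∈ X, G.Adj v u)
    (ψ : X → ℕ) (hψ : Function.Injective ψ)
    (φ' : (Xᶜ : Set V) → ℕ) (hd : ∀ x u, φ' u ≠ ψ x)
    (hp : Proper (G.induce Xᶜ) φ') (hs : SAchieved S (G.induce Xᶜ) φ') :
    ∃ φ : V → ℕ, (∀ x : X, φ x = ψ x) ∧ (∀ x : (Xᶜ : Set V), φ x = φ' x) ∧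
      Proper G φ ∧ SAchieved S G φ := by
  classical
  obtain ⟨φ, hφ1, hφ2⟩ : ∃ φ : V → ℕ, (∀ x : X, φ x = ψ x) ∧
      (∀ x : (Xᶜ : Set V), φ x = φ' x) := by
    refine ⟨fun v => if h : v ∈ X then ψ ⟨v, h⟩ else φ' ⟨v, h⟩, ?_, ?_⟩
    · intro x
      simp
    · rintro ⟨x, hx⟩
      have hx' : x ∉ X := hx
      simp [hx']
  have key : ∀ x ∈ X, ∀ u, φ u = φ x → u = x := by
    intro x hx u hu
    by_cases hu' : u ∈ X
    · have e : ψ ⟨u, hu'⟩ = ψ ⟨x, hx⟩ := by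
        rw [← hφ1, ← hφ1]; exact hu
      exact congrArg Subtype.val (hψ e)
    · exact absurd (by rw [← hφ1, ← hφ2]; exact hu) (hd ⟨x, hx⟩ ⟨u, hu'⟩)
  refine ⟨φ, hφ1, hφ2, ?_, ?_⟩
  · intro u w huw he
    by_cases hw : w ∈ X
    · exact huw.ne (key w hw u he)
    by_cases hu : u ∈ X
    · exact huw.ne (key u hu w he.symm).symm
    exact hp (u := ⟨u, hu⟩) (w := ⟨w, hw⟩) huw (by rw [← hφ2, ← hφ2]; exact he)
  · intro v hv
    by_cases hn : ∃ u ∈ X, G.Adj v u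
    · obtain ⟨u, hu, hvu⟩ := hn
      refine ⟨1, h1, φ u, ?_⟩
      rw [Set.ncard_eq_one]
      refine ⟨u, ?_⟩
      ext w
      constructor
      · rintro ⟨_, hw⟩
        exact key u hu w hw
      · rintro rfl
        exact ⟨hvu, rfl⟩
    · have hvX : v ∉ X := fun h => hn (hX v h hv)
      push Not at hn
      obtain ⟨u, hu⟩ := hv
      have huX : u ∉ X := fun h => hn u h hu
      obtain ⟨s, hsS, c, hc⟩ := hs ⟨v, hvX⟩ ⟨⟨u, huX⟩, hu⟩
      refine ⟨s, hsS, c, ?_⟩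
      rw [← hc, ← Set.ncard_image_of_injective _ Subtype.val_injective]
      congr 1
      ext w
      constructor
      · rintro ⟨h1, h2⟩
        have hw : w ∉ X := fun h => hn w h h1
        exact ⟨⟨w, hw⟩, ⟨h1, by rw [← hφ2]; exact h2⟩, rfl⟩
      · rintro ⟨w', ⟨h1, h2⟩, rfl⟩
        exact ⟨h1, by rw [hφ2]; exact h2⟩

lemma exists_X {V : Type} [Fintype V] (G : SimpleGraph V) (Y : Set V) :
    ∃ X : Set V, Y ⊆ X ∧ X.ncard ≤ 2 * Y.ncard ∧
      ∀ v ∈ X, (G.neighborSet v).Nonempty → ∃ u ∈ X, G.Adj v u := by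
  classical
  let n : V → V := fun v => if h : (G.neighborSet v).Nonempty then h.some else v
  have hn : ∀ v, (G.neighborSet v).Nonempty → G.Adj v (n v) := by
    intro v h
    have : n v = h.some := dif_pos h
    rw [this]
    exact h.some_mem
  have hn' : ∀ v, ¬ (G.neighborSet v).Nonempty → n v = v := fun v h => dif_neg h
  refine ⟨Y ∪ n '' Y, Set.subset_union_left, ?_, ?_⟩
  · have a := Set.ncard_union_le Y (n '' Y)
    have b := Set.ncard_image_le (f := n) (Set.toFinite Y)
    omega
  · rintro v (hv | ⟨y, hy, rfl⟩) h
    · exact ⟨n v, Or.inr ⟨v, hv, rfl⟩, hn v h⟩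
    · by_cases hy' : (G.neighborSet y).Nonempty
      · exact ⟨y, Or.inl hy, (hn y hy').symm⟩
      · rw [hn' y hy'] at h
        exact absurd h hy'

lemma exists_sdr {V : Type} [Fintype V] (X : Set V) (L : X → Finset ℕ)
    (h : ∀ x, X.ncard ≤ (L x).card) :
    ∃ ψ : X → ℕ, Function.Injective ψ ∧ ∀ x, ψ x ∈ L x := by
  classical
  rw [← Finset.all_card_le_biUnion_card_iff_exists_injective]
  intro s
  rcases s.eq_empty_or_nonempty with rfl | ⟨x, hx⟩
  · simp
  · calc s.card ≤ Fintype.card X := Finset.card_le_univ s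
      _ = X.ncard := by rw [← Nat.card_coe_set_eq, Nat.card_eq_fintype_card]
      _ ≤ (L x).card := h x
      _ ≤ _ := Finset.card_le_card (Finset.subset_biUnion_of_mem L hx)

theorem stmt12 (S : Set ℕ) (hSpos : ∀ s ∈ S, 0 < s) (h1 : 1 ∈ S)
    (V : Type) [Fintype V] (G : SimpleGraph V) (k c : ℕ)
    (Y : Set V) (hY : Y.ncard ≤ k) :
    ((∀ X : Set V, Y ⊆ X → X.ncard ≤ 2 * Y.ncard → SChoosable S (G.induce Xᶜ) c) →
      SChoosable S G (c + 2 * k)) ∧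
    ((∀ X : Set V, Y ⊆ X → X.ncard ≤ 2 * Y.ncard → SColorable S (G.induce Xᶜ) c) →
      SColorable S G (c + 2 * k)) := by
  classical
  obtain ⟨X, hYX, hXc, hXn⟩ := exists_X G Y
  constructor
  · intro H L hL
    obtain ⟨ψ, hψ, hψL⟩ := exists_sdr X (fun x => L x) (fun x => by have := hL x; omega)
    obtain ⟨φ', hm, hp, hs⟩ := H X hYX hXc (fun v => L v \ Finset.univ.image ψ) (by
      intro v
      have a := Finset.le_card_sdiff (Finset.univ.image ψ) (L v)
      have b : (Finset.univ.image ψ).card ≤ X.ncard := by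
        rw [← Nat.card_coe_set_eq, Nat.card_eq_fintype_card]
        exact Finset.card_image_le
      have := hL v
      omega)
    obtain ⟨φ, e1, e2, hp', hs'⟩ := glue_aux S h1 G X hXn ψ hψ φ' (by
      intro x u he
      have := (Finset.mem_sdiff.1 (hm u)).2
      exact this (he ▸ Finset.mem_image_of_mem ψ (Finset.mem_univ x))) hp hs
    refine ⟨φ, fun v => ?_, hp', hs'⟩
    by_cases hv : v ∈ X
    · exact (e1 ⟨v, hv⟩) ▸ hψL ⟨v, hv⟩
    · exact (e2 ⟨v, hv⟩) ▸ (Finset.mem_sdiff.1 (hm ⟨v, hv⟩)).1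
  · intro H
    obtain ⟨ψ, hψ, hψL⟩ := exists_sdr X (fun _ => Finset.Icc (c + 1) (c + 2 * k))
      (fun x => by rw [Nat.card_Icc]; omega)
    obtain ⟨φ', hm, hp, hs⟩ := H X hYX hXc
    obtain ⟨φ, e1, e2, hp', hs'⟩ := glue_aux S h1 G X hXn ψ hψ φ' (by
      intro x u he
      have a := Finset.mem_Icc.1 (hm u)
      have b := Finset.mem_Icc.1 (hψL x)
      omega) hp hs
    refine ⟨φ, fun v => ?_, hp', hs'⟩
    rw [Finset.mem_Icc]
    by_cases hv : v ∈ X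
    · have a := e1 ⟨v, hv⟩
      have b := Finset.mem_Icc.1 (hψL ⟨v, hv⟩)
      simp only at a
      omega
    · have a := e2 ⟨v, hv⟩
      have b := Finset.mem_Icc.1 (hm ⟨v, hv⟩)
      simp only at a
      omega


end CFPaper
end

section
/- Let d ≥ 1 be a real number. If G is a finite simple graph that has at most d vertices of degree at least d, then G is conflict-free (4d−1)-choosable. -/
open SimpleGraph

universe u v

namespace CFPaper

variable {V : Type u} {W : Type v}

/-- Distinct colors can be chosen greedily on a set `D` if all lists have size at least `#D`. -/
theorem exists_rainbow {V : Type} [DecidableEq V] (L : V → Finset ℕ) (D : Finset V)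
    (hne : ∀ v, (L v).Nonempty) (hL : ∀ v, D.card ≤ (L v).card) :
    ∃ φ : V → ℕ, (∀ v, φ v ∈ L v) ∧ Set.InjOn φ (D : Set V) := by
  induction D using Finset.induction_on with
  | empty =>
    choose φ hφ using hne
    exact ⟨φ, hφ, by simp⟩
  | insert a s ha ih =>
    rw [Finset.card_insert_of_notMem ha] at hL
    obtain ⟨φ, h1, h2⟩ := ih (fun v => by have := hL v; omega)
    have hlt : (s.image φ).card < (L a).card := by
      have := hL a
      have := Finset.card_image_le (s := s) (f := φ)
      omega
    obtain ⟨c, hc, hc'⟩ := Finset.exists_mem_notMem_of_card_lt_card hlt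
    refine ⟨Function.update φ a c, ?_, ?_⟩
    · intro v
      by_cases hv : v = a
      · subst hv; simpa using hc
      · simpa [hv] using h1 v
    · have key : ∀ x ∈ s, φ x ≠ c := fun x hx h => hc' (Finset.mem_image.2 ⟨x, hx, h⟩)
      intro x hx y hy hxy
      simp only [Finset.coe_insert, Set.mem_insert_iff, Finset.mem_coe] at hx hy
      by_cases hxa : x = a <;> by_cases hya : y = a
      · rw [hxa, hya]
      · have hys : y ∈ s := hy.resolve_left hya
        simp only [hxa, Function.update_self, Function.update_of_ne hya] at hxy
        exact absurd hxy.symm (key y hys)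
      · have hxs : x ∈ s := hx.resolve_left hxa
        simp only [hya, Function.update_self, Function.update_of_ne hxa] at hxy
        exact absurd hxy (key x hxs)
      · simp only [Function.update_of_ne hxa, Function.update_of_ne hya] at hxy
        exact h2 (hx.resolve_left hxa) (hy.resolve_left hya) hxy

/-- The greedy invariant: `φ` is proper on `S`, and every vertex with a neighbor in `S` has a
neighbor in `S` whose color is unique among its neighbors in `S`. -/
def Good_s13 {V : Type} (G : SimpleGraph V) (L : V → Finset ℕ) (S : Finset V) (φ : V → ℕ) : Prop :=
  (∀ v, φ v ∈ L v) ∧ (∀ u ∈ S, ∀ w ∈ S, G.Adj u w → φ u ≠ φ w) ∧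
    ∀ w, (∃ u ∈ S, G.Adj w u) →
      ∃ u ∈ S, G.Adj w u ∧ ∀ u' ∈ S, G.Adj w u' → φ u' = φ u → u' = u

theorem good_insert {V : Type} [Fintype V] [DecidableEq V] (G : SimpleGraph V)
    (L : V → Finset ℕ) (S : Finset V) (φ : V → ℕ) (hg : Good_s13 G L S φ) (a : V) (ha : a ∉ S)
    (hL : 2 * (G.neighborSet a).ncard < (L a).card) :
    ∃ ψ, Good_s13 G L (insert a S) ψ := by
  classical
  obtain ⟨h1, h2, h3⟩ := hg
  choose! g hgS hgA hgU using h3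
  set N : Finset V := Finset.univ.filter (fun w => G.Adj a w) with hN
  have hNc : N.card = (G.neighborSet a).ncard := by
    rw [← Set.ncard_coe_finset]
    congr 1
    ext w
    simp [hN]
  have hlt : (N.image φ ∪ N.image (fun w => φ (g w))).card < (L a).card := by
    have := Finset.card_union_le (N.image φ) (N.image (fun w => φ (g w)))
    have := Finset.card_image_le (s := N) (f := φ)
    have := Finset.card_image_le (s := N) (f := fun w => φ (g w))
    omega
  obtain ⟨c, hc, hc'⟩ := Finset.exists_mem_notMem_of_card_lt_card hlt
  have k1 : ∀ w, G.Adj a w → φ w ≠ c := fun w hw h =>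
    hc' (Finset.mem_union_left _ (Finset.mem_image.2 ⟨w, by simp [hN, hw], h⟩))
  have k2 : ∀ w, G.Adj a w → φ (g w) ≠ c := fun w hw h =>
    hc' (Finset.mem_union_right _ (Finset.mem_image.2 ⟨w, by simp [hN, hw], h⟩))
  have e1 : Function.update φ a c a = c := Function.update_self ..
  have e2 : ∀ x ∈ S, Function.update φ a c x = φ x := fun x hx =>
    by
    have hxa : x ≠ a := by rintro rfl; exact ha hx
    exact Function.update_of_ne hxa _ _
  refine ⟨Function.update φ a c, ?_, ?_, ?_⟩
  · intro v
    by_cases hv : v = a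
    · subst hv; simpa using hc
    · simpa [hv] using h1 v
  · intro u hu w hw huw
    rcases Finset.mem_insert.1 hu with rfl | hu'
    · rcases Finset.mem_insert.1 hw with rfl | hw
      · exact absurd huw (G.loopless.irrefl _)
      · rw [e1, e2 w hw]
        exact (k1 w huw).symm
    · rcases Finset.mem_insert.1 hw with rfl | hw
      · rw [e1, e2 u hu']
        exact k1 u huw.symm
      · rw [e2 u hu', e2 w hw]
        exact h2 u hu' w hw huw
  · intro w hw
    by_cases hS : ∃ u ∈ S, G.Adj w u
    · have hex := hS
      refine ⟨g w, Finset.mem_insert_of_mem (hgS w hex), hgA w hex, ?_⟩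
      intro u' hu' hwu' he
      rw [e2 _ (hgS w hex)] at he
      rcases Finset.mem_insert.1 hu' with rfl | hu'
      · rw [e1] at he
        exact absurd he.symm (k2 w hwu'.symm)
      · rw [e2 _ hu'] at he
        exact hgU w hex u' hu' hwu' he
    · obtain ⟨u, hu, hwu⟩ := hw
      have hua : u = a := by
        rcases Finset.mem_insert.1 hu with h | h
        · exact h
        · exact absurd ⟨u, h, hwu⟩ hS
      subst hua
      refine ⟨u, Finset.mem_insert_self _ _, hwu, ?_⟩
      intro u' hu' hwu' _
      rcases Finset.mem_insert.1 hu' with h | h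
      · exact h
      · exact absurd ⟨u', h, hwu'⟩ hS

theorem good_extend {V : Type} [Fintype V] [DecidableEq V] (G : SimpleGraph V)
    (L : V → Finset ℕ) (D : Finset V) (hD : ∃ φ, Good_s13 G L D φ)
    (hL : ∀ a, a ∉ D → 2 * (G.neighborSet a).ncard < (L a).card) (T : Finset V) :
    ∃ φ, Good_s13 G L (T ∪ D) φ := by
  induction T using Finset.induction_on with
  | empty => simpa using hD
  | insert a s ha ih =>
    rw [Finset.insert_union]
    by_cases h : a ∈ s ∪ D
    · rwa [Finset.insert_eq_of_mem h]
    · obtain ⟨φ, hφ⟩ := ih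
      exact good_insert G L _ φ hφ a h (hL a (fun h' => h (Finset.mem_union_right _ h')))

theorem stmt13 (d : ℝ) (hd : 1 ≤ d) (V : Type) [Fintype V] (G : SimpleGraph V)
    (h : ({v : V | d ≤ ((G.neighborSet v).ncard : ℝ)}.ncard : ℝ) ≤ d) :
    CFChoosable G (4 * d - 1) := by
  classical
  intro L hL
  set D : Finset V := Finset.univ.filter (fun v => d ≤ ((G.neighborSet v).ncard : ℝ)) with hDdef
  have hDc : (D.card : ℝ) ≤ d := by
    have : D.card = {v : V | d ≤ ((G.neighborSet v).ncard : ℝ)}.ncard := by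
      rw [← Set.ncard_coe_finset]
      congr 1
      ext w
      simp [hDdef]
    rw [this]
    exact h
  have hne : ∀ v, (L v).Nonempty := by
    intro v
    rw [← Finset.card_pos]
    have h0 := hL v
    have : (0 : ℝ) < ((L v).card : ℝ) := by linarith
    exact_mod_cast this
  have hDL : ∀ v, D.card ≤ (L v).card := by
    intro v
    have h0 := hL v
    have : (D.card : ℝ) ≤ ((L v).card : ℝ) := by linarith
    exact_mod_cast this
  obtain ⟨φ₀, hφL, hφI⟩ := exists_rainbow L D hne hDL
  have hgood : Good_s13 G L D φ₀ := by
    refine ⟨hφL, ?_, ?_⟩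
    · intro u hu w hw huw he
      exact huw.ne (hφI hu hw he)
    · rintro w ⟨u, hu, hwu⟩
      exact ⟨u, hu, hwu, fun u' hu' _ he => hφI hu' hu he⟩
  have hlow : ∀ a, a ∉ D → 2 * (G.neighborSet a).ncard < (L a).card := by
    intro a ha
    have h0 := hL a
    have h1 : ((G.neighborSet a).ncard : ℝ) < d := by
      by_contra hcon
      exact ha (by simpa [hDdef] using hcon)
    have : ((2 * (G.neighborSet a).ncard : ℕ) : ℝ) < ((L a).card : ℝ) := by
      push_cast
      linarith
    exact_mod_cast this
  obtain ⟨φ, h1, h2, h3⟩ := good_extend G L D ⟨φ₀, hgood⟩ hlow Finset.univ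
  have hmem : ∀ x : V, x ∈ Finset.univ ∪ D := fun x => by simp
  refine ⟨φ, h1, fun u w huw => h2 u (hmem u) w (hmem w) huw, ?_⟩
  rintro v ⟨x, hx⟩
  obtain ⟨u, _, hvu, hu⟩ := h3 v ⟨x, hmem x, hx⟩
  refine ⟨φ u, ?_⟩
  rw [Set.ncard_eq_one]
  refine ⟨u, ?_⟩
  ext y
  simp only [Set.mem_ofPred_eq, Set.mem_singleton_iff]
  constructor
  · rintro ⟨hy, he⟩
    exact hu y (hmem y) hy he
  · rintro rfl
    exact ⟨hvu, rfl⟩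

end CFPaper
end
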